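/- (Siegel integral formula) For every bounded, compactly supported measurable function f : ℝⁿ → ℝ, the integral over X_n = SL(n,ℝ)/SL(n,ℤ) (with respect to Haar probability measure μ) of the function Λ ↦ Σ_{0 ≠ v ∈ Λ} f(v) equals the Lebesgue integral ∫_{ℝⁿ} f dm. -/

import Mathlib

open MeasureTheory Filter Matrix Real ENNReal

noncomputable section

/-- `SL(n, ℝ)`. -/
abbrev SLR (n : ℕ) := Matrix.SpecialLinearGroup (Fin n) ℝ

instance (n : ℕ) : TopologicalSpace (SLR n) :=
  TopologicalSpace.induced (fun g => (g : Matrix (Fin n) (Fin n) ℝ)) inferInstance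

/-- The image of `SL(n, ℤ)` in `SL(n, ℝ)`. -/
def latticeGamma (n : ℕ) : Subgroup (SLR n) :=
  (Matrix.SpecialLinearGroup.map (n := Fin n) (Int.castRingHom ℝ)).range

/-- The space of unimodular lattices `X_n = SL(n,ℝ)/SL(n,ℤ)`. -/
abbrev LatticeSpace (n : ℕ) := SLR n ⧸ latticeGamma n

instance (n : ℕ) : MeasurableSpace (LatticeSpace n) := borel _

/-- The real vector `g · m` of the lattice `g ℤⁿ` coming from the integer vector `m`. -/
def vecOf (n : ℕ) (g : SLR n) (m : Fin n → ℤ) : Fin n → ℝ :=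
  (g : Matrix (Fin n) (Fin n) ℝ).mulVec (fun i => (m i : ℝ))

/-- Euclidean norm on `Fin n → ℝ`. -/
def eNorm {n : ℕ} (v : Fin n → ℝ) : ℝ := ‖(WithLp.equiv 2 (Fin n → ℝ)).symm v‖

/-- The lattice `Λ` contains a nonzero vector lying in `A`. -/
def Intersects (n : ℕ) (Λ : LatticeSpace n) (A : Set (Fin n → ℝ)) : Prop :=
  ∀ g : SLR n, (QuotientGroup.mk g : LatticeSpace n) = Λ →
    ∃ m : Fin n → ℤ, m ≠ 0 ∧ vecOf n g m ∈ A

/-- `α₁(Λ) = sup_{0 ≠ v ∈ Λ} 1/‖v‖` (Euclidean norm). -/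
def alpha1 (n : ℕ) (Λ : LatticeSpace n) : ℝ :=
  sSup {r : ℝ | ∃ g : SLR n, (QuotientGroup.mk g : LatticeSpace n) = Λ ∧
    ∃ m : Fin n → ℤ, m ≠ 0 ∧ r = 1 / eNorm (vecOf n g m)}

/-! ### Topology and Borel structure of `SL(n, ℝ)` and of the space of lattices -/

section TopologyBorel

variable {n : ℕ}

theorem SLR.isClosedEmbedding_coe :
    Topology.IsClosedEmbedding (fun g : SLR n => (g : Matrix (Fin n) (Fin n) ℝ)) :=
  Matrix.SpecialLinearGroup.isClosedEmbedding_val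

theorem SLR.continuous_coe : Continuous (fun g : SLR n => (g : Matrix (Fin n) (Fin n) ℝ)) :=
  SLR.isClosedEmbedding_coe.continuous

instance : IsTopologicalGroup (SLR n) := Matrix.SpecialLinearGroup.topologicalGroup

instance : SecondCountableTopology (Matrix (Fin n) (Fin n) ℝ) :=
  inferInstanceAs (SecondCountableTopology (Fin n → Fin n → ℝ))

instance : LocallyCompactSpace (Matrix (Fin n) (Fin n) ℝ) :=
  inferInstanceAs (LocallyCompactSpace (Fin n → Fin n → ℝ))

instance : SecondCountableTopology (SLR n) :=
  SLR.isClosedEmbedding_coe.isEmbedding.secondCountableTopology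

instance : LocallyCompactSpace (SLR n) := SLR.isClosedEmbedding_coe.locallyCompactSpace

instance : T2Space (SLR n) := SLR.isClosedEmbedding_coe.isEmbedding.t2Space

instance : PolishSpace (Matrix (Fin n) (Fin n) ℝ) :=
  inferInstanceAs (PolishSpace (Fin n → Fin n → ℝ))

instance : PolishSpace (SLR n) := SLR.isClosedEmbedding_coe.polishSpace

instance : MeasurableSpace (SLR n) := borel _

instance : BorelSpace (SLR n) := ⟨rfl⟩

instance : BorelSpace (LatticeSpace n) := ⟨rfl⟩

theorem latticeGamma_isClosed : IsClosed (latticeGamma n : Set (SLR n)) := by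
  have h : Topology.IsClosedEmbedding (Int.castRingHom ℝ) := Int.isClosedEmbedding_coe_real
  have := (h.specialLinearGroup_map (n := Fin n)).isClosed_range
  convert! this using 1

instance : T1Space (LatticeSpace n) := by
  have := latticeGamma_isClosed (n := n)
  infer_instance

instance : Countable (latticeGamma n) := by
  have : Countable (Matrix (Fin n) (Fin n) ℤ) := inferInstanceAs (Countable (Fin n → Fin n → ℤ))
  have : Countable (Matrix.SpecialLinearGroup (Fin n) ℤ) :=
    (Subtype.val_injective (p := fun A : Matrix (Fin n) (Fin n) ℤ => A.det = 1)).countable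
  have h : (Set.range (Matrix.SpecialLinearGroup.map (n := Fin n) (Int.castRingHom ℝ))).Countable :=
    Set.countable_range _
  exact h.to_subtype

theorem measurable_mk : Measurable (QuotientGroup.mk : SLR n → LatticeSpace n) :=
  Continuous.measurable (γ := LatticeSpace n) QuotientGroup.continuous_mk

/-- A right `SL(n, ℤ)`-invariant Borel function on `SL(n, ℝ)` descends to a Borel function. -/
theorem measurable_out_of_invariant {β : Type*} [MeasurableSpace β] {F : SLR n → β}
    (hF : Measurable F) (hinv : ∀ g, ∀ γ ∈ latticeGamma n, F (g * γ) = F g) :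
    Measurable (fun Λ : LatticeSpace n => F Λ.out) := by
  have h : MeasurableSpace.map (QuotientGroup.mk : SLR n → LatticeSpace n) inferInstance
      = borel (LatticeSpace n) :=
    Measurable.map_measurableSpace_eq_borel (Y := LatticeSpace n) measurable_mk
      QuotientGroup.mk_surjective
  intro s hs
  have h2 : (QuotientGroup.mk : SLR n → LatticeSpace n) ⁻¹'
      ((fun Λ : LatticeSpace n => F Λ.out) ⁻¹' s) = F ⁻¹' s := by
    ext g
    obtain ⟨γ, hγ⟩ := QuotientGroup.mk_out_eq_mul (latticeGamma n) g
    simp only [Set.mem_preimage]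
    rw [hγ, hinv g _ γ.2]
  have h3 : MeasurableSet[MeasurableSpace.map (QuotientGroup.mk : SLR n → LatticeSpace n)
      inferInstance] ((fun Λ : LatticeSpace n => F Λ.out) ⁻¹' s) := by
    rw [MeasurableSpace.map_def, h2]
    exact hF hs
  rw [h] at h3
  exact h3

end TopologyBorel

/-! ### Elementary matrices and primitive integer vectors -/

section Shears

variable {n : ℕ} {R : Type*} [CommRing R]

/-- The elementary matrix `1 + c E_{ij}` as an element of the special linear group. -/
def shear (i j : Fin n) (h : i ≠ j) (c : R) : Matrix.SpecialLinearGroup (Fin n) R :=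
  ⟨Matrix.transvection i j c, Matrix.det_transvection_of_ne i j h c⟩

theorem shear_mulVec (i j : Fin n) (h : i ≠ j) (c : R) (x : Fin n → R) :
    (shear i j h c : Matrix (Fin n) (Fin n) R) *ᵥ x = x + Pi.single i (c * x j) := by
  simp only [shear, Matrix.transvection, Matrix.add_mulVec, Matrix.one_mulVec]
  congr 1
  ext k
  by_cases hk : k = i
  · subst hk
    simp [Matrix.mulVec, dotProduct, Matrix.single_apply]
  · simp [Matrix.mulVec, dotProduct, hk, Ne.symm hk]

/-- A nonzero integer vector is an integer multiple of the first column of a matrix in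
`SL(n, ℤ)`. -/
theorem exists_eq_smul_mulVec_single (m : Fin (n + 1) → ℤ) (hm : m ≠ 0) :
    ∃ (γ : Matrix.SpecialLinearGroup (Fin (n + 1)) ℤ) (k : ℤ), k ≠ 0 ∧
      m = (γ : Matrix (Fin (n + 1)) (Fin (n + 1)) ℤ) *ᵥ Pi.single 0 k := by
  let φ : Matrix.SpecialLinearGroup (Fin (n + 1)) ℤ → ℕ := fun γ =>
    ∑ i, (((γ : Matrix (Fin (n + 1)) (Fin (n + 1)) ℤ) *ᵥ m) i).natAbs
  obtain ⟨γ, hγ⟩ : ∃ γ, ∀ δ, φ γ ≤ φ δ := by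
    obtain ⟨γ, hγ⟩ := WellFounded.has_min (measure φ).wf Set.univ Set.univ_nonempty
    exact ⟨γ, fun δ => not_lt.mp (hγ.2 δ (Set.mem_univ _))⟩
  set x := (γ : Matrix (Fin (n + 1)) (Fin (n + 1)) ℤ) *ᵥ m with hx
  have key : ∀ i j, i ≠ j → x j ≠ 0 → (x j).natAbs ≤ (x i).natAbs → False := by
    intro i j hij hj hle
    obtain ⟨c, hc⟩ : ∃ c : ℤ, (x i + c * x j).natAbs < (x i).natAbs := by
      rcases le_total 0 (x i) with h1 | h1 <;> rcases le_total 0 (x j) with h2 | h2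
      · exact ⟨-1, by omega⟩
      · exact ⟨1, by omega⟩
      · exact ⟨1, by omega⟩
      · exact ⟨-1, by omega⟩
    have h := hγ (shear i j hij c * γ)
    have hlt : φ (shear i j hij c * γ) < φ γ := by
      apply Finset.sum_lt_sum
      · intro l _
        rw [Matrix.SpecialLinearGroup.coe_mul, ← Matrix.mulVec_mulVec, ← hx, shear_mulVec]
        by_cases hl : l = i
        · subst hl; simpa using hc.le
        · simp [hl]
      · refine ⟨i, Finset.mem_univ _, ?_⟩
        rw [Matrix.SpecialLinearGroup.coe_mul, ← Matrix.mulVec_mulVec, ← hx, shear_mulVec]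
        simpa using hc
    omega
  have hγx : ((γ⁻¹ : Matrix.SpecialLinearGroup (Fin (n + 1)) ℤ) :
      Matrix (Fin (n + 1)) (Fin (n + 1)) ℤ) *ᵥ x = m := by
    rw [hx, Matrix.mulVec_mulVec, ← Matrix.SpecialLinearGroup.coe_mul]
    simp
  have hx0 : x ≠ 0 := by
    intro h0
    rw [h0, Matrix.mulVec_zero] at hγx
    exact hm hγx.symm
  obtain ⟨i, hi⟩ : ∃ i, x i ≠ 0 := Function.ne_iff.mp hx0
  have hother : ∀ j, j ≠ i → x j = 0 := by
    intro j hj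
    by_contra hj0
    rcases le_total (x j).natAbs (x i).natAbs with h | h
    · exact key i j hj.symm hj0 h
    · exact key j i hj hi h
  have hxs : x = Pi.single i (x i) := by
    ext j
    by_cases hj : j = i
    · subst hj; simp
    · simp [hj, hother j hj]
  by_cases hi0 : i = 0
  · subst hi0
    exact ⟨γ⁻¹, x 0, hi, by rw [← hxs, hγx]⟩
  · refine ⟨γ⁻¹ * shear 0 i (Ne.symm hi0) (-1) * shear i 0 hi0 1, x i, hi, ?_⟩
    rw [Matrix.SpecialLinearGroup.coe_mul, Matrix.SpecialLinearGroup.coe_mul,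
      ← Matrix.mulVec_mulVec, ← Matrix.mulVec_mulVec, shear_mulVec, shear_mulVec, ← hγx]
    congr 1
    rw [hxs]
    ext j
    by_cases hj : j = i
    · subst hj; simp [hi0]
    · by_cases hj0 : j = 0
      · subst hj0; simp [hi0, Ne.symm hi0]
      · simp [hj, hj0]

end Shears

/-! ### Reduction of bases, with a volume bound -/

section Reduction

variable {n : ℕ}

/-- The Schur complement of the upper left entry. -/
def schur (C : Fin (n + 1) → Fin (n + 1) → ℝ) : Fin n → Fin n → ℝ :=
  fun i j => C i.succ j.succ - C i.succ 0 / C 0 0 * C 0 j.succ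

theorem det_eq_mul_det_schur (C : Fin (n + 1) → Fin (n + 1) → ℝ) (h : C 0 0 ≠ 0) :
    (Matrix.of C).det = C 0 0 * (Matrix.of (schur C)).det := by
  let c : Fin (n + 1) → ℝ := Fin.cons 0 (fun i => C i.succ 0 / C 0 0)
  let B : Matrix (Fin (n + 1)) (Fin (n + 1)) ℝ := Matrix.of fun i j => C i j - c i * C 0 j
  have h1 : (Matrix.of C).det = B.det := by
    apply Matrix.det_eq_of_forall_row_eq_smul_add_const c 0 (by simp [c])
    intro i j
    simp [B, c]
  rw [h1, Matrix.det_succ_column_zero, Fin.sum_univ_succ]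
  have h2 : ∀ i : Fin n, B i.succ 0 = 0 := by
    intro i
    simp [B, c, h]
  have h3 : B.submatrix (Fin.succAbove 0) Fin.succ = Matrix.of (schur C) := by
    ext i j
    simp [B, c, schur]
  simp only [h2, h3]
  simp [B, c]

/-- Multiplication of a real matrix, given by its rows, by an integer matrix. -/
def intMul (γ : Matrix (Fin n) (Fin n) ℤ) (C : Fin n → Fin n → ℝ) : Fin n → Fin n → ℝ :=
  fun i j => ∑ l, (γ i l : ℝ) * C l j

theorem of_intMul (γ : Matrix (Fin n) (Fin n) ℤ) (C : Fin n → Fin n → ℝ) :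
    Matrix.of (intMul γ C) = γ.map (Int.cast : ℤ → ℝ) * Matrix.of C := by
  ext i j
  simp [intMul, Matrix.mul_apply]

theorem intMul_mul (γ δ : Matrix (Fin n) (Fin n) ℤ) (C : Fin n → Fin n → ℝ) :
    intMul (γ * δ) C = intMul γ (intMul δ C) := by
  have : Matrix.of (intMul (γ * δ) C) = Matrix.of (intMul γ (intMul δ C)) := by
    simp only [of_intMul]
    rw [← Matrix.mul_assoc]
    congr 1
    exact Matrix.map_mul_intCast γ δ
  exact this

theorem det_intMul (γ : Matrix.SpecialLinearGroup (Fin n) ℤ) (C : Fin n → Fin n → ℝ) :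
    (Matrix.of (intMul γ C)).det = (Matrix.of C).det := by
  rw [of_intMul, Matrix.det_mul]
  have : ((γ : Matrix (Fin n) (Fin n) ℤ).map (Int.cast : ℤ → ℝ)).det = 1 := by
    have := (Int.castRingHom ℝ).map_det (γ : Matrix (Fin n) (Fin n) ℤ)
    simp at this
    exact this.symm
  rw [this, one_mul]

/-- Some measurable cone of bases contains a representative of every lattice, and its part of
bounded determinant has volume controlled by the right power of the determinant. -/
def HasReductionCone (n : ℕ) : Prop :=
  ∃ S : Set (Fin n → Fin n → ℝ), MeasurableSet S ∧ (∀ t : ℝ, 0 < t → ∀ C ∈ S, t • C ∈ S) ∧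
    (∀ C : Fin n → Fin n → ℝ, (Matrix.of C).det ≠ 0 →
      ∃ γ : Matrix.SpecialLinearGroup (Fin n) ℤ, intMul γ C ∈ S) ∧
    ∃ K : ℝ, 0 ≤ K ∧ ∀ T : ℝ, 0 < T →
      volume (S ∩ {C | |(Matrix.of C).det| ≤ T}) ≤ ENNReal.ofReal (K * T ^ n)

/-- Some measurable cone of bases contains a basis starting with any given primitive vector of any
given lattice, and its part of bounded determinant and bounded first vector has controlled
volume. -/
def HasRelativeReductionCone (n : ℕ) : Prop :=
  ∃ S : Set (Fin (n + 1) → Fin (n + 1) → ℝ), MeasurableSet S ∧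
    (∀ t : ℝ, 0 < t → ∀ C ∈ S, t • C ∈ S) ∧
    (∀ C : Fin (n + 1) → Fin (n + 1) → ℝ, (Matrix.of C).det ≠ 0 →
      ∃ γ : Matrix.SpecialLinearGroup (Fin (n + 1)) ℤ, intMul γ C 0 = C 0 ∧
        intMul γ C ∈ S) ∧
    ∃ K : ℝ, 0 ≤ K ∧ ∀ T ρ : ℝ, 0 < T → 0 < ρ →
      volume (S ∩ {C | ‖C 0‖ ≤ ρ ∧ |(Matrix.of C).det| ≤ T}) ≤
        ENNReal.ofReal (K * T ^ n * ρ ^ (n + 1))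

/-- The cone of bases whose first vector has nonzero first coordinate, reduced modulo that vector
and with Schur complement in `S`. -/
def pivotCone (S : Set (Fin n → Fin n → ℝ)) : Set (Fin (n + 1) → Fin (n + 1) → ℝ) :=
  {C | C 0 0 ≠ 0 ∧ (∀ i : Fin n, C i.succ 0 / C 0 0 ∈ Set.Ico (0 : ℝ) 1) ∧ schur C ∈ S}

theorem measurable_det_of : Measurable fun C : Fin n → Fin n → ℝ => (Matrix.of C).det := by
  apply Continuous.measurable
  have : Continuous fun C : Fin n → Fin n → ℝ => (Matrix.of C : Matrix (Fin n) (Fin n) ℝ) :=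
    continuous_id
  exact this.matrix_det

theorem measurable_schur : Measurable (schur : (Fin (n + 1) → Fin (n + 1) → ℝ) → _) := by
  unfold schur
  fun_prop

theorem measurableSet_pivotCone {S : Set (Fin n → Fin n → ℝ)} (hS : MeasurableSet S) :
    MeasurableSet (pivotCone S) := by
  have e : pivotCone S = {C : Fin (n + 1) → Fin (n + 1) → ℝ | C 0 0 ≠ 0} ∩
      ((⋂ i : Fin n, (fun C : Fin (n + 1) → Fin (n + 1) → ℝ => C i.succ 0 / C 0 0) ⁻¹'
        Set.Ico (0 : ℝ) 1) ∩ schur ⁻¹' S) := by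
    ext C; simp [pivotCone]
  rw [e]
  refine MeasurableSet.inter ?_ (MeasurableSet.inter (MeasurableSet.iInter fun i => ?_)
    (measurable_schur hS))
  · exact (measurableSet_singleton (0 : ℝ)).compl.preimage
      (f := fun C : Fin (n + 1) → Fin (n + 1) → ℝ => C 0 0) (by fun_prop)
  · exact measurableSet_Ico.preimage (by fun_prop)

theorem smul_mem_pivotCone {S : Set (Fin n → Fin n → ℝ)}
    (hS : ∀ t : ℝ, 0 < t → ∀ C ∈ S, t • C ∈ S) (t : ℝ) (ht : 0 < t)
    (C : Fin (n + 1) → Fin (n + 1) → ℝ) (hC : C ∈ pivotCone S) : t • C ∈ pivotCone S := by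
  obtain ⟨h1, h2, h3⟩ := hC
  have hd : ∀ x : ℝ, t * x / (t * C 0 0) = x / C 0 0 := fun x => by field_simp
  refine ⟨by simp [h1, ht.ne'], fun i => by simpa [hd] using h2 i, ?_⟩
  have : schur (t • C) = t • schur C := by
    ext i j
    simp [schur, hd]
    ring
  rw [this]
  exact hS t ht _ h3

theorem exists_intMul_mem_pivotCone {S : Set (Fin n → Fin n → ℝ)}
    (hS : ∀ C : Fin n → Fin n → ℝ, (Matrix.of C).det ≠ 0 →
      ∃ γ : Matrix.SpecialLinearGroup (Fin n) ℤ, intMul γ C ∈ S)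
    (C : Fin (n + 1) → Fin (n + 1) → ℝ) (hC : (Matrix.of C).det ≠ 0) (h0 : C 0 0 ≠ 0) :
    ∃ γ : Matrix.SpecialLinearGroup (Fin (n + 1)) ℤ, intMul γ C 0 = C 0 ∧
      intMul γ C ∈ pivotCone S := by
  rw [det_eq_mul_det_schur C h0] at hC
  obtain ⟨δ, hδ⟩ := hS (schur C) (right_ne_zero_of_mul hC)
  let q : Fin n → ℝ := fun i => (∑ l, (δ i l : ℝ) * C l.succ 0) / C 0 0
  let γ : Matrix (Fin (n + 1)) (Fin (n + 1)) ℤ :=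
    Matrix.of (Fin.cons (Fin.cons 1 0) fun i => Fin.cons (-⌊q i⌋) (δ i))
  have hγ : γ.det = 1 := by
    rw [Matrix.det_succ_row_zero, Fin.sum_univ_succ]
    have h1 : γ.submatrix Fin.succ (Fin.succAbove 0) = δ := by
      ext i j
      simp [γ]
    have h2 : ∀ j : Fin n, γ 0 j.succ = 0 := fun j => by simp [γ]
    simp only [h1, h2]
    simp [γ]
  have hrow0 : intMul γ C 0 = C 0 := by
    ext j
    simp [intMul, γ, Fin.sum_univ_succ]
  have hrow : ∀ i j, intMul γ C (Fin.succ i) j =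
      -⌊q i⌋ * C 0 j + ∑ l, (δ i l : ℝ) * C l.succ j := by
    intro i j
    simp [intMul, γ, Fin.sum_univ_succ]
  have hq : ∀ i, intMul γ C (Fin.succ i) 0 / C 0 0 = Int.fract (q i) := by
    intro i
    rw [hrow, add_div, Int.fract, mul_div_assoc, div_self h0]
    simp only [q]
    ring
  refine ⟨⟨γ, hγ⟩, hrow0, ?_, fun i => ?_, ?_⟩
  · simpa [hrow0] using h0
  · simp only [hrow0, hq]
    exact ⟨Int.fract_nonneg _, Int.fract_lt_one _⟩
  · convert hδ using 1
    ext i j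
    simp only [schur, hrow0, hq]
    rw [hrow]
    simp only [intMul, schur, mul_sub, Finset.sum_sub_distrib, Int.fract]
    have : ∑ l, (δ i l : ℝ) * (C l.succ 0 / C 0 0 * C 0 j.succ) = q i * C 0 j.succ := by
      simp only [q, Finset.sum_div, Finset.sum_mul]
      refine Finset.sum_congr rfl fun l _ => by ring
    rw [this]
    ring

/-- Separating the first column and clearing it by means of a fixed vector `b`. -/
def clearColumn (b : Fin (n + 1) → ℝ) (D : Fin n → Fin (n + 1) → ℝ) :
    (Fin n → ℝ) × (Fin n → Fin n → ℝ) :=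
  (fun i => D i 0, fun i j => D i j.succ - D i 0 / b 0 * b j.succ)

theorem measurePreserving_clearColumn (b : Fin (n + 1) → ℝ) :
    MeasurePreserving (clearColumn b) volume volume := by
  have h1 : MeasurePreserving
      (fun p : ℝ × (Fin n → ℝ) => (p.1, fun j => p.2 j - p.1 / b 0 * b j.succ))
      volume volume := by
    have := (MeasurePreserving.id (volume : Measure ℝ)).skew_product
      (μc := (volume : Measure (Fin n → ℝ))) (μd := (volume : Measure (Fin n → ℝ)))
      (g := fun y d j => d j - y / b 0 * b j.succ) (by
        unfold Function.uncurry
        fun_prop) (by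
        refine Eventually.of_forall fun y => ?_
        have := (measurePreserving_sub_right (volume : Measure (Fin n → ℝ))
          (fun j => y / b 0 * b j.succ)).map_eq
        exact this)
    exact this
  have h2 : MeasurePreserving (fun (D : Fin n → Fin (n + 1) → ℝ) (i : Fin n) =>
      ((D i 0, fun j : Fin n => D i j.succ - D i 0 / b 0 * b j.succ) : ℝ × (Fin n → ℝ)))
      volume volume := by
    refine volume_preserving_pi (f := fun _ (d : Fin (n + 1) → ℝ) =>
      ((d 0, fun j : Fin n => d j.succ - d 0 / b 0 * b j.succ) : ℝ × (Fin n → ℝ))) fun i => ?_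
    exact h1.comp (volume_preserving_piFinSuccAbove (fun _ : Fin (n + 1) => ℝ) 0)
  exact (volume_measurePreserving_arrowProdEquivProdArrow ℝ (Fin n → ℝ) (Fin n)).comp h2

theorem volume_pivotCone_le {S : Set (Fin n → Fin n → ℝ)} (hS : MeasurableSet S) {K : ℝ}
    (hK : ∀ T : ℝ, 0 < T →
      volume (S ∩ {C | |(Matrix.of C).det| ≤ T}) ≤ ENNReal.ofReal (K * T ^ n))
    (T ρ : ℝ) (hT : 0 < T) (hρ : 0 < ρ) :
    volume (pivotCone S ∩ {C | ‖C 0‖ ≤ ρ ∧ |(Matrix.of C).det| ≤ T}) ≤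
      ENNReal.ofReal (K * T ^ n) * ENNReal.ofReal ((2 * ρ) ^ (n + 1)) := by
  set U := pivotCone S ∩ {C | ‖C 0‖ ≤ ρ ∧ |(Matrix.of C).det| ≤ T} with hU
  have hUm : MeasurableSet U := by
    refine (measurableSet_pivotCone hS).inter (MeasurableSet.inter ?_ ?_)
    · exact measurableSet_le (f := fun C : Fin (n + 1) → Fin (n + 1) → ℝ => ‖C 0‖)
        (by fun_prop) measurable_const
    · exact measurableSet_le (f := fun C : Fin (n + 1) → Fin (n + 1) → ℝ => |(Matrix.of C).det|)
        (measurable_det_of.norm) measurable_const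
  let e := MeasurableEquiv.piFinSuccAbove (fun _ : Fin (n + 1) => Fin (n + 1) → ℝ) 0
  have he : MeasurePreserving e.symm volume volume :=
    (volume_preserving_piFinSuccAbove (fun _ : Fin (n + 1) => Fin (n + 1) → ℝ) 0).symm
  rw [← he.measure_preimage hUm.nullMeasurableSet]
  have hvol : (volume : Measure ((Fin (n + 1) → ℝ) × (Fin n → Fin (n + 1) → ℝ))) =
    Measure.prod volume volume := rfl
  rw [hvol, Measure.prod_apply (e.symm.measurable hUm)]
  have hesymm0 : ∀ b D, e.symm (b, D) 0 = b := fun b D => by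
    simp [e, MeasurableEquiv.piFinSuccAbove]
  have hesymm1 : ∀ b D (i : Fin n), e.symm (b, D) i.succ = D i := fun b D i => by
    simp [e, MeasurableEquiv.piFinSuccAbove]
  have hslice : ∀ b : Fin (n + 1) → ℝ, volume (Prod.mk b ⁻¹' (e.symm ⁻¹' U)) ≤
      (Metric.closedBall (0 : Fin (n + 1) → ℝ) ρ).indicator
        (fun _ => ENNReal.ofReal (K * T ^ n)) b := by
    intro b
    by_cases hb : b ∈ Metric.closedBall (0 : Fin (n + 1) → ℝ) ρ ∧ b 0 ≠ 0
    · obtain ⟨hb, hb0⟩ := hb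
      rw [Set.indicator_of_mem hb]
      have hb0' : 0 < |b 0| := abs_pos.mpr hb0
      have hsub : Prod.mk b ⁻¹' (e.symm ⁻¹' U) ⊆ clearColumn b ⁻¹'
          ((Set.univ.pi fun _ => (fun y => (b 0)⁻¹ * y) ⁻¹' Set.Ico (0 : ℝ) 1) ×ˢ
            (S ∩ {C | |(Matrix.of C).det| ≤ T / |b 0|})) := by
        rintro D ⟨⟨h1, h2, h3⟩, h4, h5⟩
        have hs : schur (e.symm (b, D)) = (clearColumn b D).2 := by
          ext i j
          simp only [schur, clearColumn, hesymm0, hesymm1]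
        refine ⟨fun i _ => ?_, ?_, ?_⟩
        · have := h2 i
          rw [hesymm0, hesymm1, div_eq_inv_mul] at this
          exact this
        · rw [← hs]; exact h3
        · change |(Matrix.of (e.symm (b, D))).det| ≤ T at h5
          rw [det_eq_mul_det_schur _ h1, hesymm0, hs, abs_mul] at h5
          change |(Matrix.of (clearColumn b D).2).det| ≤ T / |b 0|
          rw [le_div_iff₀ hb0', mul_comm]
          exact h5
      refine (measure_mono hsub).trans ?_
      rw [(measurePreserving_clearColumn b).measure_preimage]
      · have hvol2 : (volume : Measure ((Fin n → ℝ) × (Fin n → Fin n → ℝ))) =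
          Measure.prod volume volume := rfl
        rw [hvol2, Measure.prod_prod, volume_pi_pi]
        simp only [Real.volume_preimage_mul_left (inv_ne_zero hb0), Real.volume_Ico, inv_inv,
          sub_zero, ENNReal.ofReal_one, mul_one, Finset.prod_const, Finset.card_univ,
          Fintype.card_fin]
        rw [← ENNReal.ofReal_pow (abs_nonneg _)]
        refine (mul_le_mul_right (hK (T / |b 0|) (by positivity)) _).trans ?_
        rw [← ENNReal.ofReal_mul (by positivity)]
        apply ENNReal.ofReal_le_ofReal
        rw [div_pow]
        apply le_of_eq
        field_simp
      · refine (MeasurableSet.prod (MeasurableSet.univ_pi fun _ => ?_) ?_).nullMeasurableSet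
        · exact measurableSet_Ico.preimage (by fun_prop)
        · exact hS.inter (measurableSet_le measurable_det_of.norm measurable_const)
    · have : Prod.mk b ⁻¹' (e.symm ⁻¹' U) = ∅ := by
        rw [Set.eq_empty_iff_forall_notMem]
        rintro D ⟨⟨h1, -, -⟩, h4, -⟩
        rw [hesymm0] at h1
        change ‖e.symm (b, D) 0‖ ≤ ρ at h4
        rw [hesymm0] at h4
        exact hb ⟨by simpa using h4, h1⟩
      rw [this]
      simp
  refine (lintegral_mono hslice).trans ?_
  rw [lintegral_indicator_const Metric.isClosed_closedBall.measurableSet,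
    Real.volume_pi_closedBall _ hρ.le]
  simp

end Reduction

section ReductionInduction

variable {n : ℕ}

theorem measurePreserving_permute_columns (σ : Equiv.Perm (Fin n)) :
    MeasurePreserving (fun (C : Fin n → Fin n → ℝ) i j => C i (σ j)) volume volume := by
  refine volume_preserving_pi (f := fun _ (c : Fin n → ℝ) j => c (σ j)) fun i => ?_
  have := volume_measurePreserving_piCongrLeft (fun _ : Fin n => ℝ) σ.symm
  convert! this using 1
  ext c j
  have := MeasurableEquiv.piCongrLeft_apply_apply (e := σ.symm) (β := fun _ : Fin n => ℝ)
    (x := c) (i := σ j)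
  simpa using this.symm

theorem HasReductionCone.relative (h : HasReductionCone n) : HasRelativeReductionCone n := by
  obtain ⟨S, hSm, hScone, hSred, K, hK0, hK⟩ := h
  let P : Fin (n + 1) → (Fin (n + 1) → Fin (n + 1) → ℝ) → (Fin (n + 1) → Fin (n + 1) → ℝ) :=
    fun p C i j => C i (Equiv.swap 0 p j)
  have hP : ∀ p, MeasurePreserving (P p) volume volume := fun p =>
    measurePreserving_permute_columns (Equiv.swap 0 p)
  have hPint : ∀ p γ C, P p (intMul γ C) = intMul γ (P p C) := fun p γ C => rfl
  have hPdet : ∀ p C, |(Matrix.of (P p C)).det| = |(Matrix.of C).det| := by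
    intro p C
    have := Matrix.det_permute' (Equiv.swap 0 p) (Matrix.of C)
    have e : Matrix.of (P p C) = (Matrix.of C).submatrix id (Equiv.swap 0 p) := rfl
    rw [e, this, abs_mul]
    rcases Int.units_eq_one_or (Equiv.Perm.sign (Equiv.swap 0 p)) with h | h <;> simp [h]
  have hPnorm : ∀ p C, ‖P p C 0‖ ≤ ‖C 0‖ := by
    intro p C
    exact (pi_norm_le_iff_of_nonneg (norm_nonneg _)).mpr fun j => norm_le_pi_norm (C 0) _
  have hPP : ∀ p C, P p (P p C) = C := by
    intro p C
    ext i j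
    simp [P]
  refine ⟨⋃ p, P p ⁻¹' pivotCone S,
    MeasurableSet.iUnion fun p => (hP p).measurable (measurableSet_pivotCone hSm), ?_, ?_,
    (n + 1) * K * 2 ^ (n + 1), by positivity, ?_⟩
  · intro t ht C hC
    obtain ⟨p, hp⟩ := Set.mem_iUnion.mp hC
    exact Set.mem_iUnion.mpr ⟨p, smul_mem_pivotCone hScone t ht _ hp⟩
  · intro C hC
    obtain ⟨p, hp⟩ : ∃ p, C 0 p ≠ 0 := by
      by_contra! h0
      exact hC (Matrix.det_eq_zero_of_row_eq_zero 0 h0)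
    obtain ⟨γ, h1, h2⟩ := exists_intMul_mem_pivotCone hSred (P p C)
      (by rw [← abs_ne_zero, hPdet]; exact abs_ne_zero.mpr hC) (by simpa [P] using hp)
    refine ⟨γ, ?_, Set.mem_iUnion.mpr ⟨p, by rwa [Set.mem_preimage, hPint]⟩⟩
    have h3 : P p (P p (intMul γ C)) 0 = P p (P p C) 0 := by
      ext j
      rw [hPint p]
      change intMul γ (P p C) 0 _ = P p C 0 _
      rw [h1]
    rwa [hPP, hPP] at h3
  · intro T ρ hT hρ
    have hsub : (⋃ p, P p ⁻¹' pivotCone S) ∩ {C | ‖C 0‖ ≤ ρ ∧ |(Matrix.of C).det| ≤ T} ⊆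
        ⋃ p, P p ⁻¹' (pivotCone S ∩ {C | ‖C 0‖ ≤ ρ ∧ |(Matrix.of C).det| ≤ T}) := by
      rintro C ⟨hC, h1, h2⟩
      obtain ⟨p, hp⟩ := Set.mem_iUnion.mp hC
      refine Set.mem_iUnion.mpr ⟨p, hp, (hPnorm p C).trans h1, ?_⟩
      rwa [hPdet]
    refine (measure_mono hsub).trans ((measure_iUnion_le _).trans ?_)
    have hle : ∀ p, volume (P p ⁻¹' (pivotCone S ∩
        {C | ‖C 0‖ ≤ ρ ∧ |(Matrix.of C).det| ≤ T})) ≤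
        ENNReal.ofReal (K * T ^ n) * ENNReal.ofReal ((2 * ρ) ^ (n + 1)) := fun p =>
      ((hP p).measure_preimage_le _).trans (volume_pivotCone_le hSm hK T ρ hT hρ)
    refine (ENNReal.tsum_le_tsum hle).trans (le_of_eq ?_)
    rw [tsum_fintype, Finset.sum_const, ← ENNReal.ofReal_mul (by positivity), Finset.card_univ,
      Fintype.card_fin, nsmul_eq_mul, ← ENNReal.ofReal_natCast,
      ← ENNReal.ofReal_mul (by positivity)]
    congr 1
    push_cast
    ring

/-- Minkowski's theorem for the lattice spanned by the rows of `C`. -/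
theorem exists_norm_pow_le_two_mul_det (C : Fin (n + 1) → Fin (n + 1) → ℝ)
    (hC : (Matrix.of C).det ≠ 0) :
    ∃ m : Fin (n + 1) → ℤ, m ≠ 0 ∧
      ‖∑ i, (m i : ℝ) • C i‖ ^ (n + 1) ≤ 2 * |(Matrix.of C).det| := by
  have hli : LinearIndependent ℝ C := Matrix.linearIndependent_rows_of_det_ne_zero hC
  let b : Module.Basis (Fin (n + 1)) ℝ (Fin (n + 1) → ℝ) :=
    basisOfLinearIndependentOfCardEqFinrank hli (by simp)
  have hb : ⇑b = C := coe_basisOfLinearIndependentOfCardEqFinrank hli (by simp)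
  let L := Submodule.span ℤ (Set.range b)
  have hfund := ZSpan.isAddFundamentalDomain' b (volume : Measure (Fin (n + 1) → ℝ))
  have hvol : volume (ZSpan.fundamentalDomain b) = ENNReal.ofReal |(Matrix.of C).det| := by
    rw [ZSpan.volume_fundamentalDomain, hb]
  have hpos : 0 < |(Matrix.of C).det| := abs_pos.mpr hC
  let ρ : ℝ := (2 * |(Matrix.of C).det|) ^ (1 / ((n : ℝ) + 1))
  have hρ0 : 0 < ρ := by positivity
  have hρ : ρ ^ (n + 1) = 2 * |(Matrix.of C).det| := by
    rw [← Real.rpow_natCast, ← Real.rpow_mul (by positivity)]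
    push_cast
    rw [one_div, inv_mul_cancel₀ (by positivity), Real.rpow_one]
  have hcount : Countable L.toAddSubgroup := by
    change Countable L
    infer_instance
  obtain ⟨x, hx0, hx⟩ := exists_ne_zero_mem_lattice_of_measure_mul_two_pow_lt_measure
    (s := Metric.closedBall (0 : Fin (n + 1) → ℝ) ρ) hfund
    (fun x hx => by simpa using hx) (convex_closedBall _ _) (by
      rw [hvol, Real.volume_pi_closedBall _ hρ0.le]
      simp only [Module.finrank_fintype_fun_eq_card, Fintype.card_fin]
      rw [mul_pow, hρ, mul_comm, ENNReal.ofReal_mul (by positivity),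
        ENNReal.ofReal_pow (by norm_num), ENNReal.ofReal_ofNat]
      refine (ENNReal.mul_lt_mul_iff_right (by positivity) (by finiteness)).mpr ?_
      rw [ENNReal.ofReal_lt_ofReal_iff (by positivity)]
      linarith)
  have hxL : (x : Fin (n + 1) → ℝ) ∈ Submodule.span ℤ (Set.range b) := x.2
  rw [Submodule.mem_span_range_iff_exists_fun] at hxL
  obtain ⟨m, hm⟩ := hxL
  have hsum : ∑ i, (m i : ℝ) • C i = x := by
    simp only [← hm, hb, Int.cast_smul_eq_zsmul]
  refine ⟨m, ?_, ?_⟩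
  · rintro rfl
    apply hx0
    ext1
    rw [← hsum]
    simp
  · rw [hsum, ← hρ]
    gcongr
    simpa using hx

theorem HasRelativeReductionCone.succ (h : HasRelativeReductionCone n) :
    HasReductionCone (n + 1) := by
  obtain ⟨S, hSm, hScone, hSred, K, hK0, hK⟩ := h
  refine ⟨S ∩ {C | ‖C 0‖ ^ (n + 1) ≤ 2 * |(Matrix.of C).det|}, ?_, ?_, ?_, 2 * K, by positivity, ?_⟩
  · refine hSm.inter (measurableSet_le
      (f := fun C : Fin (n + 1) → Fin (n + 1) → ℝ => ‖C 0‖ ^ (n + 1))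
      (g := fun C : Fin (n + 1) → Fin (n + 1) → ℝ => 2 * |(Matrix.of C).det|)
      (by fun_prop) (measurable_det_of.norm.const_mul 2))
  · rintro t ht C ⟨hC, hC2⟩
    refine ⟨hScone t ht C hC, ?_⟩
    have e : Matrix.of (t • C) = t • Matrix.of C := rfl
    simp only [Set.mem_ofPred_eq] at hC2 ⊢
    rw [e, Matrix.det_smul, Pi.smul_apply, norm_smul, mul_pow, abs_mul, Fintype.card_fin, abs_pow,
      Real.norm_eq_abs]
    nlinarith [pow_pos (abs_pos.mpr ht.ne') (n + 1)]
  · intro C hC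
    obtain ⟨m, hm0, hm⟩ := exists_norm_pow_le_two_mul_det C hC
    obtain ⟨γ, k, hk, hγ⟩ := exists_eq_smul_mulVec_single m hm0
    have hrow : (k : ℝ) • intMul (γ.transpose : Matrix.SpecialLinearGroup (Fin (n + 1)) ℤ) C 0 =
        ∑ i, (m i : ℝ) • C i := by
      ext j
      rw [hγ]
      simp [intMul, Finset.sum_apply, Finset.mul_sum, mul_assoc, mul_left_comm]
    have hle : ‖intMul (γ.transpose : Matrix.SpecialLinearGroup (Fin (n + 1)) ℤ) C 0‖ ≤
        ‖∑ i, (m i : ℝ) • C i‖ := by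
      rw [← hrow, norm_smul]
      refine le_mul_of_one_le_left (norm_nonneg _) ?_
      rw [Real.norm_eq_abs]
      exact_mod_cast Int.one_le_abs hk
    obtain ⟨δ, h1, h2⟩ := hSred (intMul γ.transpose C) (by rwa [det_intMul])
    refine ⟨δ * γ.transpose, ?_⟩
    rw [Matrix.SpecialLinearGroup.coe_mul, intMul_mul]
    refine ⟨h2, ?_⟩
    change ‖_‖ ^ (n + 1) ≤ _
    rw [h1, det_intMul, det_intMul]
    exact (pow_le_pow_left₀ (norm_nonneg _) hle _).trans hm
  · intro T hT
    let ρ : ℝ := (2 * T) ^ (1 / ((n : ℝ) + 1))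
    have hρ0 : 0 < ρ := by positivity
    have hρ : ρ ^ (n + 1) = 2 * T := by
      rw [← Real.rpow_natCast, ← Real.rpow_mul (by positivity)]
      push_cast
      rw [one_div, inv_mul_cancel₀ (by positivity), Real.rpow_one]
    have hsub : S ∩ {C | ‖C 0‖ ^ (n + 1) ≤ 2 * |(Matrix.of C).det|} ∩
        {C | |(Matrix.of C).det| ≤ T} ⊆
        S ∩ {C | ‖C 0‖ ≤ ρ ∧ |(Matrix.of C).det| ≤ T} := by
      rintro C ⟨⟨h1, h2⟩, h3⟩
      simp only [Set.mem_ofPred_eq] at h2 h3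
      refine ⟨h1, ?_, h3⟩
      refine le_of_pow_le_pow_left₀ (n := n + 1) (by omega) hρ0.le ?_
      rw [hρ]
      linarith
    refine (measure_mono hsub).trans ((hK T ρ hT hρ0).trans (ENNReal.ofReal_le_ofReal ?_))
    rw [hρ]
    apply le_of_eq
    ring

theorem hasReductionCone_zero : HasReductionCone 0 := by
  refine ⟨Set.univ, MeasurableSet.univ, by simp, fun C _ => ⟨1, trivial⟩, 1, by simp, ?_⟩
  intro T _
  refine (measure_mono (Set.subset_univ _)).trans ?_
  simp [volume_pi]

theorem hasReductionCone : ∀ n, HasReductionCone n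
  | 0 => hasReductionCone_zero
  | n + 1 => (hasReductionCone n).relative.succ

end ReductionInduction

/-! ### Shear-invariant measures on `ℝⁿ` -/

section ShearInvariant

variable {n : ℕ} {ν : Measure (Fin n → ℝ)}

theorem measurable_add_single (i : Fin n) {c : (Fin n → ℝ) → ℝ} (hc : Measurable c) :
    Measurable fun x : Fin n → ℝ => x + Pi.single i (c x) := by
  refine measurable_id.add (measurable_pi_iff.mpr fun k => ?_)
  by_cases hk : k = i
  · subst hk; simpa using hc
  · simp [hk]

theorem norm_single (i : Fin n) (c : ℝ) : ‖(Pi.single i c : Fin n → ℝ)‖ = |c| := by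
  rw [Pi.norm_single, Real.norm_eq_abs]

/-- A measure which is invariant under shears is carried by the complement of each coordinate
hyperplane. -/
theorem measure_coord_eq_zero [IsFiniteMeasureOnCompacts ν] (h0 : ν {0} = 0)
    (hinv : ∀ i j : Fin n, i ≠ j → ∀ c : ℝ,
      MeasurePreserving (fun x : Fin n → ℝ => x + Pi.single i (c * x j)) ν ν) (j : Fin n) :
    ν {x | x j = 0} = 0 := by
  have key : ∀ k, k ≠ j → ∀ N : ℕ, ν {x | x j = 0 ∧ x k ≠ 0 ∧ ‖x‖ ≤ N} = 0 := by
    intro k hk N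
    set A := {x : Fin n → ℝ | x j = 0 ∧ x k ≠ 0 ∧ ‖x‖ ≤ N} with hA
    have hAm : MeasurableSet A := by
      refine MeasurableSet.inter ?_ (MeasurableSet.inter ?_ ?_)
      · exact measurableSet_eq_fun (f := fun x : Fin n → ℝ => x j) (g := fun _ => (0 : ℝ))
          (by fun_prop) (by fun_prop)
      · exact (measurableSet_eq_fun (f := fun x : Fin n → ℝ => x k) (g := fun _ => (0 : ℝ))
          (by fun_prop) (by fun_prop)).compl
      · exact measurableSet_le (f := fun x : Fin n → ℝ => ‖x‖) (by fun_prop) (by fun_prop)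
    let t : ℕ → ℝ := fun m => 1 / ((m : ℝ) + 1)
    have ht : Function.Injective t := by
      intro a b hab
      simp only [t, one_div, _root_.inv_inj, _root_.add_left_inj, Nat.cast_inj] at hab
      exact hab
    have ht1 : ∀ m, |t m| ≤ 1 := by
      intro m
      rw [abs_of_nonneg (by positivity)]
      simp only [t]
      rw [div_le_one (by positivity)]
      linarith [(Nat.cast_nonneg m : (0 : ℝ) ≤ m)]
    let B : ℕ → Set (Fin n → ℝ) := fun m => (fun x => x + Pi.single j (t m * x k)) ⁻¹' A
    have hBm : ∀ m, MeasurableSet (B m) := fun m => (hinv j k hk.symm (t m)).measurable hAm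
    have hBA : ∀ m, ν (B m) = ν A := fun m =>
      (hinv j k hk.symm (t m)).measure_preimage hAm.nullMeasurableSet
    have hB : ∀ m x, x ∈ B m → x j + t m * x k = 0 ∧ x k ≠ 0 ∧ ‖x‖ ≤ N + N := by
      rintro m x ⟨h1, h2, h3⟩
      simp only [Pi.add_apply, Pi.single_eq_same, Pi.single_eq_of_ne hk, add_zero] at h1 h2
      refine ⟨h1, h2, ?_⟩
      have h4 : |x k| ≤ N := by
        have := norm_le_pi_norm (x + Pi.single j (t m * x k)) k
        simp only [Pi.add_apply, Pi.single_eq_of_ne hk, add_zero, Real.norm_eq_abs] at this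
        exact this.trans h3
      calc ‖x‖ = ‖(x + Pi.single j (t m * x k)) - Pi.single j (t m * x k)‖ := by simp
        _ ≤ ‖x + Pi.single j (t m * x k)‖ + ‖(Pi.single j (t m * x k) : Fin n → ℝ)‖ :=
          norm_sub_le _ _
        _ ≤ N + N := by
          refine add_le_add h3 ?_
          rw [norm_single, abs_mul]
          exact (mul_le_of_le_one_left (abs_nonneg _) (ht1 m)).trans h4
    have hdisj : Pairwise (Function.onFun Disjoint B) := by
      intro a b hab
      refine Set.disjoint_left.mpr fun x hxa hxb => hab (ht ?_)
      have h1 := hB a x hxa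
      have h2 := hB b x hxb
      exact mul_right_cancel₀ h1.2.1 (by linarith [h1.1, h2.1])
    have hU : (⋃ m, B m) ⊆ Metric.closedBall 0 (N + N) := by
      intro x hx
      obtain ⟨m, hm⟩ := Set.mem_iUnion.mp hx
      simpa using (hB m x hm).2.2
    by_contra hne
    have h1 := measure_iUnion (μ := ν) hdisj hBm
    simp only [hBA, ENNReal.tsum_const_eq_top_of_ne_zero hne] at h1
    have h2 : ν (Metric.closedBall (0 : Fin n → ℝ) (N + N)) < ⊤ :=
      (isCompact_closedBall _ _).measure_lt_top
    exact (h1 ▸ (measure_mono hU).trans_lt h2).ne rfl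
  have hsub : {x : Fin n → ℝ | x j = 0} ⊆
      {0} ∪ ⋃ (k : Fin n) (_ : k ≠ j) (N : ℕ), {x | x j = 0 ∧ x k ≠ 0 ∧ ‖x‖ ≤ N} := by
    intro x hx
    by_cases hx0 : x = 0
    · exact Or.inl hx0
    · right
      obtain ⟨k, hk⟩ : ∃ k, x k ≠ 0 := Function.ne_iff.mp hx0
      obtain ⟨N, hN⟩ := exists_nat_ge ‖x‖
      refine Set.mem_iUnion.mpr ⟨k, Set.mem_iUnion.mpr ⟨?_, Set.mem_iUnion.mpr ⟨N, hx, hk, hN⟩⟩⟩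
      rintro rfl
      exact hk hx
  refine measure_mono_null hsub (measure_union_null h0 ?_)
  exact measure_iUnion_null fun k => measure_iUnion_null fun hk => measure_iUnion_null fun N =>
    key k hk N

/-- Shears whose coefficient depends on the unchanged coordinate and takes countably many
values. -/
theorem measurePreserving_variable_shear
    (hinv : ∀ i j : Fin n, i ≠ j → ∀ c : ℝ,
      MeasurePreserving (fun x : Fin n → ℝ => x + Pi.single i (c * x j)) ν ν)
    (i j : Fin n) (hij : i ≠ j) {q : ℝ → ℤ} (hq : Measurable q) (c : ℤ → ℝ) :
    MeasurePreserving (fun x : Fin n → ℝ => x + Pi.single i (c (q (x j)) * x j)) ν ν := by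
  have hm : Measurable (fun x : Fin n → ℝ => x + Pi.single i (c (q (x j)) * x j)) := by
    have h1 : Measurable fun x : Fin n → ℝ => x j := measurable_pi_apply j
    have h2 : Measurable c := measurable_of_countable c
    exact measurable_add_single i ((h2.comp (hq.comp h1)).mul h1)
  refine ⟨hm, Measure.ext fun A hA => ?_⟩
  rw [Measure.map_apply hm hA]
  let P : ℤ → Set (Fin n → ℝ) := fun z => {x | q (x j) = z}
  have hP : ∀ z, MeasurableSet (P z) := fun z =>
    (hq.comp (measurable_pi_apply j)) (measurableSet_singleton z)
  have hPdisj : Pairwise (Function.onFun Disjoint P) := fun a b hab =>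
    Set.disjoint_left.mpr fun x hxa hxb => hab (hxa.symm.trans hxb)
  have hPU : (⋃ z, P z) = Set.univ := Set.eq_univ_of_forall fun x => Set.mem_iUnion.mpr ⟨_, rfl⟩
  have hsplit : ∀ B, MeasurableSet B → ν B = ∑' z, ν (P z ∩ B) := by
    intro B hB
    rw [← measure_iUnion (fun a b hab => (hPdisj hab).mono Set.inter_subset_left
      Set.inter_subset_left) (fun z => (hP z).inter hB), ← Set.iUnion_inter, hPU, Set.univ_inter]
  rw [hsplit _ (hm hA), hsplit A hA]
  refine tsum_congr fun z => ?_
  rw [← (hinv i j hij (c z)).measure_preimage ((hP z).inter hA).nullMeasurableSet]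
  congr 1
  ext x
  simp only [P, Set.mem_inter_iff, Set.mem_preimage, Set.mem_ofPred_eq, Pi.add_apply,
    Pi.single_eq_of_ne hij.symm, add_zero]
  constructor
  · rintro ⟨h1, h2⟩
    rw [h1] at h2
    exact ⟨h1, h2⟩
  · rintro ⟨h1, h2⟩
    rw [h1]
    exact ⟨rfl, h2⟩

theorem map_add_single_of_shear_invariant [IsFiniteMeasureOnCompacts ν]
    (hinv : ∀ i j : Fin n, i ≠ j → ∀ c : ℝ,
      MeasurePreserving (fun x : Fin n → ℝ => x + Pi.single i (c * x j)) ν ν)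
    (i j : Fin n) (hij : i ≠ j) (hj : ν {x | x j = 0} = 0) (s : ℝ) :
    ν.map (fun x => Pi.single i s + x) = ν := by
  have hfin : IsFiniteMeasureOnCompacts (ν.map (fun x => Pi.single i s + x)) :=
    Measure.IsFiniteMeasureOnCompacts.map ν (Homeomorph.addLeft (Pi.single i s : Fin n → ℝ))
  refine Measure.ext_of_integral_eq_on_compactlySupported fun f => ?_
  rw [integral_map (f := fun x => f x) (by fun_prop) f.continuous.aestronglyMeasurable]
  let q : ℕ → ℝ → ℤ := fun k y => ⌊(k : ℝ) * s / y⌋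
  let T : ℕ → (Fin n → ℝ) → (Fin n → ℝ) := fun k x =>
    x + Pi.single i ((fun z : ℤ => (z : ℝ) / k) (q k (x j)) * x j)
  have hT : ∀ k, MeasurePreserving (T k) ν ν := fun k =>
    measurePreserving_variable_shear hinv i j hij (q := q k)
      (by have : Measurable fun y : ℝ => (k : ℝ) * s / y := by fun_prop
          exact Int.measurable_floor.comp this) fun z => (z : ℝ) / k
  have hTint : ∀ k, ∫ x, f (T k x) ∂ν = ∫ x, f x ∂ν := by
    intro k
    rw [← integral_map (f := fun x => f x) (hT k).measurable.aemeasurable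
      f.continuous.aestronglyMeasurable,
      (hT k).map_eq]
  have herr : ∀ k : ℕ, 0 < k → ∀ y : ℝ, y ≠ 0 → |(q k y : ℝ) / k * y - s| ≤ |y| / k := by
    intro k hk y hy
    have hk' : (0 : ℝ) < k := Nat.cast_pos.mpr hk
    have h1 : (q k y : ℝ) / k * y - s = -(Int.fract ((k : ℝ) * s / y) * (y / k)) := by
      rw [Int.fract]
      simp only [q]
      field_simp
      ring
    rw [h1, abs_neg, abs_mul, abs_div, Nat.abs_cast]
    refine mul_le_of_le_one_left (by positivity) ?_
    rw [abs_of_nonneg (Int.fract_nonneg _)]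
    exact (Int.fract_lt_one _).le
  obtain ⟨M, hM⟩ := f.hasCompactSupport.exists_bound_of_continuous f.continuous
  obtain ⟨R, hR⟩ := f.hasCompactSupport.isCompact.isBounded.exists_norm_le
  have hae : ∀ᵐ x ∂ν, x j ≠ 0 := by
    rw [ae_iff]
    simpa using hj
  have hlim := tendsto_integral_of_dominated_convergence (μ := ν)
    (F := fun k x => f (T (k + 1) x)) (f := fun x => f (Pi.single i s + x))
    ((Metric.closedBall 0 (R + (R + |s|))).indicator fun _ => M)
    (fun k => (f.continuous.measurable.comp (hT (k + 1)).measurable).aestronglyMeasurable)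
    ((integrable_indicator_iff Metric.isClosed_closedBall.measurableSet).mpr
      (integrableOn_const (isCompact_closedBall _ _).measure_lt_top.ne))
    (fun k => by
      filter_upwards [hae] with x hx
      by_cases hxR : x ∈ Metric.closedBall (0 : Fin n → ℝ) (R + (R + |s|))
      · rw [Set.indicator_of_mem hxR]
        exact hM _
      · rw [Set.indicator_of_notMem hxR]
        have : f (T (k + 1) x) = 0 := by
          by_contra hne
          apply hxR
          have h1 := hR _ (subset_tsupport _ hne)
          have h2 : |x j| ≤ R := by
            have := norm_le_pi_norm (T (k + 1) x) j
            simp only [T, Pi.add_apply, Pi.single_eq_of_ne hij.symm, add_zero,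
              Real.norm_eq_abs] at this
            exact this.trans h1
          have h3 : |(q (k + 1) (x j) : ℝ) / (k + 1 : ℕ) * x j| ≤ R + |s| := by
            have h4 := herr (k + 1) (by omega) (x j) hx
            have h5 : |x j| / (k + 1 : ℕ) ≤ |x j| :=
              div_le_self (abs_nonneg _)
                (by push_cast; linarith [(Nat.cast_nonneg k : (0 : ℝ) ≤ k)])
            have h6 := abs_sub_abs_le_abs_sub ((q (k + 1) (x j) : ℝ) / (k + 1 : ℕ) * x j) s
            linarith
          have h7 : x = T (k + 1) x -
              Pi.single i ((q (k + 1) (x j) : ℝ) / (k + 1 : ℕ) * x j) := by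
            simp [T]
          rw [mem_closedBall_zero_iff, h7]
          refine (norm_sub_le _ _).trans (add_le_add h1 ?_)
          rw [norm_single]
          exact h3
        rw [this, norm_zero])
    (by
      filter_upwards [hae] with x hx
      refine (f.continuous.tendsto _).comp ?_
      have h1 : Tendsto (fun k : ℕ => (q (k + 1) (x j) : ℝ) / (k + 1 : ℕ) * x j) atTop
          (nhds s) := by
        rw [tendsto_iff_norm_sub_tendsto_zero]
        refine squeeze_zero (fun _ => norm_nonneg _)
          (fun k => herr (k + 1) (by omega) (x j) hx) ?_
        exact (tendsto_const_div_atTop_nhds_zero_nat |x j|).comp (tendsto_add_atTop_nat 1)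
      have h2 : Continuous fun c : ℝ => x + Pi.single i c :=
        continuous_const.add (continuous_single (A := fun _ : Fin n => ℝ) i)
      have h3 := (h2.tendsto s).comp h1
      rw [add_comm] at h3
      exact h3)
  simp only [hTint] at hlim
  exact tendsto_nhds_unique hlim tendsto_const_nhds

/-- A locally finite measure on `ℝⁿ`, `n ≥ 2`, without mass at the origin and invariant under
shears is a multiple of Lebesgue measure. -/
theorem exists_eq_smul_volume_of_shear_invariant [IsFiniteMeasureOnCompacts ν] (hn : 2 ≤ n)
    (h0 : ν {0} = 0)
    (hinv : ∀ i j : Fin n, i ≠ j → ∀ c : ℝ,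
      MeasurePreserving (fun x : Fin n → ℝ => x + Pi.single i (c * x j)) ν ν) :
    ∃ c : NNReal, ν = c • volume := by
  have hnt : Nontrivial (Fin n) := Fin.nontrivial_iff_two_le.mpr hn
  have hsingle : ∀ i s, ν.map (fun x => Pi.single i s + x) = ν := by
    intro i s
    obtain ⟨j, hj⟩ := exists_ne i
    exact map_add_single_of_shear_invariant hinv i j hj.symm (measure_coord_eq_zero h0 hinv j) s
  have hall : ∀ v : Fin n → ℝ, ν.map (fun x => v + x) = ν := by
    intro v
    rw [← Finset.univ_sum_single v]
    refine Finset.sum_induction _ (fun w => ν.map (fun x => w + x) = ν) ?_ ?_ ?_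
    · intro a b ha hb
      have : (fun x : Fin n → ℝ => a + b + x) = (fun x => a + x) ∘ (fun x => b + x) := by
        ext x; simp [add_assoc]
      change ν.map (fun x => a + b + x) = ν
      rw [this, ← Measure.map_map (by fun_prop) (by fun_prop), hb, ha]
    · simp
    · exact fun i _ => hsingle i _
  have : ν.IsAddLeftInvariant := ⟨hall⟩
  exact ⟨_, Measure.isAddLeftInvariant_eq_smul ν volume⟩

end ShearInvariant

/-! ### Averages over the space of lattices -/

section Average

variable {n : ℕ}

/-- The counting measure of a family of points. -/
def pointMeasure {ι Y : Type*} [MeasurableSpace Y] (p : ι → Y) : Measure Y :=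
  Measure.sum fun i => Measure.dirac (p i)

theorem lintegral_pointMeasure {ι Y : Type*} [MeasurableSpace Y] (p : ι → Y) {f : Y → ℝ≥0∞}
    (hf : Measurable f) : ∫⁻ y, f y ∂pointMeasure p = ∑' i, f (p i) := by
  rw [pointMeasure, lintegral_sum_measure]
  exact tsum_congr fun i => lintegral_dirac' _ hf

theorem pointMeasure_apply {ι Y : Type*} [MeasurableSpace Y] (p : ι → Y) {s : Set Y}
    (hs : MeasurableSet s) : pointMeasure p s = ∑' i, s.indicator 1 (p i) := by
  rw [← lintegral_indicator_one hs, lintegral_pointMeasure _ (measurable_one.indicator hs)]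

theorem pointMeasure_comp_equiv {ι ι' Y : Type*} [MeasurableSpace Y] (e : ι' ≃ ι) (p : ι → Y) :
    pointMeasure (fun i => p (e i)) = pointMeasure p :=
  Measure.sum_comp_equiv e fun i => Measure.dirac (p i)

theorem map_pointMeasure {ι Y Z : Type*} [MeasurableSpace Y] [MeasurableSpace Z] (p : ι → Y)
    {f : Y → Z} (hf : Measurable f) :
    (pointMeasure p).map f = pointMeasure fun i => f (p i) := by
  rw [pointMeasure, Measure.map_sum hf.aemeasurable]
  simp only [Measure.map_dirac' hf]
  rfl

theorem measurable_pointMeasure {ι X Y : Type*} [Countable ι] [MeasurableSpace X]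
    [MeasurableSpace Y] {φ : X → ι → Y} (hφ : ∀ i, Measurable fun x => φ x i) :
    Measurable fun x => pointMeasure (φ x) := by
  refine Measure.measurable_of_measurable_coe _ fun s hs => ?_
  simp only [pointMeasure_apply _ hs]
  exact Measurable.tsum fun i => (measurable_one.indicator hs).comp (hφ i)

/-- The average over the space of lattices of a family of measures. -/
def latticeAverage {Y : Type*} [MeasurableSpace Y] (μ : Measure (LatticeSpace n))
    (Ξ : SLR n → Measure Y) : Measure Y :=
  μ.bind fun Λ => Ξ Λ.out

variable {Y : Type*} [MeasurableSpace Y] {μ : Measure (LatticeSpace n)} {Ξ : SLR n → Measure Y}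

theorem lintegral_latticeAverage (hΞ : Measurable Ξ)
    (hΓ : ∀ g, ∀ γ ∈ latticeGamma n, Ξ (g * γ) = Ξ g) {f : Y → ℝ≥0∞} (hf : Measurable f) :
    ∫⁻ y, f y ∂latticeAverage μ Ξ = ∫⁻ Λ, ∫⁻ y, f y ∂Ξ Λ.out ∂μ :=
  Measure.lintegral_bind (measurable_out_of_invariant hΞ hΓ).aemeasurable hf.aemeasurable

theorem latticeAverage_apply (hΞ : Measurable Ξ)
    (hΓ : ∀ g, ∀ γ ∈ latticeGamma n, Ξ (g * γ) = Ξ g) {s : Set Y} (hs : MeasurableSet s) :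
    latticeAverage μ Ξ s = ∫⁻ Λ, Ξ Λ.out s ∂μ :=
  Measure.bind_apply hs (measurable_out_of_invariant hΞ hΓ).aemeasurable

/-- The average of an equivariant family over an invariant measure is invariant. -/
theorem map_latticeAverage
    (hμ : ∀ (g : SLR n) (s : Set (LatticeSpace n)), μ ((fun x => g • x) ⁻¹' s) = μ s)
    (hΞ : Measurable Ξ) (hΓ : ∀ g, ∀ γ ∈ latticeGamma n, Ξ (g * γ) = Ξ g) (h : SLR n)
    {T : Y → Y} (hT : Measurable T) (hTΞ : ∀ g, (Ξ g).map T = Ξ (h * g)) :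
    (latticeAverage μ Ξ).map T = latticeAverage μ Ξ := by
  have hsm : Measurable fun Λ : LatticeSpace n => h • Λ :=
    Continuous.measurable (γ := LatticeSpace n) (continuous_const_smul h)
  have hmap : μ.map (fun Λ => h • Λ) = μ :=
    Measure.ext fun s hs => by rw [Measure.map_apply hsm hs, hμ]
  have hout : ∀ Λ : LatticeSpace n, Ξ (h * Λ.out) = Ξ (h • Λ).out := by
    intro Λ
    obtain ⟨γ, hγ⟩ := QuotientGroup.mk_out_eq_mul (latticeGamma n) (h * Λ.out)
    have e : (QuotientGroup.mk (h * Λ.out) : LatticeSpace n) = h • Λ := by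
      conv_rhs => rw [← QuotientGroup.out_eq' Λ]
      rfl
    rw [e] at hγ
    rw [hγ, hΓ _ _ γ.2]
  refine Measure.ext fun s hs => ?_
  rw [Measure.map_apply hT hs, latticeAverage_apply hΞ hΓ (hT hs), latticeAverage_apply hΞ hΓ hs]
  have hm : Measurable fun Λ : LatticeSpace n => Ξ Λ.out s :=
    (Measure.measurable_coe hs).comp (measurable_out_of_invariant hΞ hΓ)
  conv_rhs => rw [← hmap, lintegral_map hm hsm]
  refine lintegral_congr fun Λ => ?_
  rw [← hout, ← hTΞ, Measure.map_apply hT hs]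

/-- The counting measure of the nonzero vectors of the lattice `g ℤⁿ`. -/
def latticeMeasure (g : SLR n) : Measure (Fin n → ℝ) :=
  pointMeasure fun m : {m : Fin n → ℤ // m ≠ 0} => vecOf n g m.1

/-- The counting measure of the coset `g SL(n, ℤ)`. -/
def orbitMeasure (g : SLR n) : Measure (SLR n) :=
  pointMeasure fun γ : latticeGamma n => g * (γ : SLR n)

theorem measurable_vecOf (m : Fin n → ℤ) : Measurable fun g : SLR n => vecOf n g m := by
  have : Continuous fun g : SLR n => vecOf n g m :=
    SLR.continuous_coe.matrix_mulVec continuous_const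
  exact this.measurable

theorem vecOf_mul (h g : SLR n) (m : Fin n → ℤ) :
    vecOf n (h * g) m = (h : Matrix (Fin n) (Fin n) ℝ) *ᵥ vecOf n g m := by
  simp [vecOf]

theorem vecOf_mul_map (g : SLR n) (γ : Matrix.SpecialLinearGroup (Fin n) ℤ) (m : Fin n → ℤ) :
    vecOf n (g * Matrix.SpecialLinearGroup.map (Int.castRingHom ℝ) γ) m =
      vecOf n g ((γ : Matrix (Fin n) (Fin n) ℤ) *ᵥ m) := by
  rw [vecOf_mul]
  simp only [vecOf, Matrix.mulVec_mulVec]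
  have h : (fun i => (((γ : Matrix (Fin n) (Fin n) ℤ) *ᵥ m) i : ℝ)) =
      (Matrix.SpecialLinearGroup.map (Int.castRingHom ℝ) γ : Matrix (Fin n) (Fin n) ℝ) *ᵥ
        fun i => (m i : ℝ) := by
    ext i
    simp [Matrix.mulVec, dotProduct]
  rw [h, Matrix.mulVec_mulVec]

theorem vecOf_injective (g : SLR n) : Function.Injective (vecOf n g) := by
  intro m m' h
  have h2 : (fun i => (m i : ℝ)) = fun i => (m' i : ℝ) := by
    have := congrArg (fun v => ((g⁻¹ : SLR n) : Matrix (Fin n) (Fin n) ℝ) *ᵥ v) h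
    simpa only [vecOf, Matrix.mulVec_mulVec, ← Matrix.SpecialLinearGroup.coe_mul, inv_mul_cancel,
      Matrix.SpecialLinearGroup.coe_one, Matrix.one_mulVec] using this
  ext i
  exact_mod_cast congrFun h2 i

theorem measurable_latticeMeasure : Measurable (latticeMeasure (n := n)) :=
  measurable_pointMeasure fun m => measurable_vecOf m.1

theorem latticeMeasure_mul_mem (g : SLR n) (γ : SLR n) (hγ : γ ∈ latticeGamma n) :
    latticeMeasure (g * γ) = latticeMeasure g := by
  obtain ⟨δ, rfl⟩ := hγ
  let act : Matrix.SpecialLinearGroup (Fin n) ℤ → {m : Fin n → ℤ // m ≠ 0} →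
      {m : Fin n → ℤ // m ≠ 0} := fun γ m =>
    ⟨(γ : Matrix (Fin n) (Fin n) ℤ) *ᵥ m.1, fun h0 => m.2 (by
      have := congrArg (fun v => ((γ⁻¹ : Matrix.SpecialLinearGroup (Fin n) ℤ) :
        Matrix (Fin n) (Fin n) ℤ) *ᵥ v) h0
      simpa only [Matrix.mulVec_mulVec, ← Matrix.SpecialLinearGroup.coe_mul, inv_mul_cancel,
        Matrix.SpecialLinearGroup.coe_one, Matrix.one_mulVec, Matrix.mulVec_zero] using this)⟩
  let e : {m : Fin n → ℤ // m ≠ 0} ≃ {m : Fin n → ℤ // m ≠ 0} :=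
    { toFun := act δ
      invFun := act δ⁻¹
      left_inv := fun m => Subtype.ext (by
        simp only [act, Matrix.mulVec_mulVec, ← Matrix.SpecialLinearGroup.coe_mul, inv_mul_cancel,
          Matrix.SpecialLinearGroup.coe_one, Matrix.one_mulVec])
      right_inv := fun m => Subtype.ext (by
        simp only [act, Matrix.mulVec_mulVec, ← Matrix.SpecialLinearGroup.coe_mul, mul_inv_cancel,
          Matrix.SpecialLinearGroup.coe_one, Matrix.one_mulVec]) }
  rw [latticeMeasure, latticeMeasure,
    ← pointMeasure_comp_equiv e fun m : {m : Fin n → ℤ // m ≠ 0} => vecOf n g m.1]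
  congr 1
  ext1 m
  exact vecOf_mul_map g δ m.1

theorem map_latticeMeasure (h g : SLR n) :
    (latticeMeasure g).map (fun x => (h : Matrix (Fin n) (Fin n) ℝ) *ᵥ x) =
      latticeMeasure (h * g) := by
  rw [latticeMeasure, map_pointMeasure]
  · simp only [latticeMeasure, vecOf_mul]
  · exact Continuous.measurable (continuous_const.matrix_mulVec continuous_id)

theorem measurable_orbitMeasure : Measurable (orbitMeasure (n := n)) :=
  measurable_pointMeasure fun γ =>
    (show Continuous fun g : SLR n => g * (γ : SLR n) from continuous_mul_const _).measurable

theorem orbitMeasure_mul_mem (g : SLR n) (γ : SLR n) (hγ : γ ∈ latticeGamma n) :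
    orbitMeasure (g * γ) = orbitMeasure g := by
  rw [orbitMeasure, orbitMeasure, ← pointMeasure_comp_equiv
    (Equiv.mulLeft (⟨γ, hγ⟩ : latticeGamma n)) fun γ : latticeGamma n => g * (γ : SLR n)]
  simp [mul_assoc]

theorem map_orbitMeasure (h g : SLR n) :
    (orbitMeasure g).map (fun x => h * x) = orbitMeasure (h * g) := by
  rw [orbitMeasure, map_pointMeasure]
  · simp only [orbitMeasure, mul_assoc]
  · exact (continuous_const_mul h).measurable

open Pointwise in
/-- A coset of `SL(n, ℤ)` meets a compact set in a uniformly bounded number of points. -/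
theorem exists_orbitMeasure_le {K : Set (SLR n)} (hK : IsCompact K) :
    ∃ N : ℕ, ∀ g : SLR n, orbitMeasure g K ≤ N := by
  have hdisc : DiscreteTopology (latticeGamma n) :=
    Matrix.SpecialLinearGroup.discreteSpecialLinearGroupIntRangeSL
  have hK2 : IsCompact (K⁻¹ * K) := hK.inv.mul hK
  have hfin : ((fun γ : latticeGamma n => (γ : SLR n)) ⁻¹' (K⁻¹ * K)).Finite := by
    have : IsCompact ((fun γ : latticeGamma n => (γ : SLR n)) ⁻¹' (K⁻¹ * K)) :=
      latticeGamma_isClosed.isClosedEmbedding_subtypeVal.isCompact_preimage hK2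
    exact this.finite_of_discrete
  refine ⟨hfin.toFinset.card, fun g => ?_⟩
  rw [orbitMeasure, pointMeasure_apply _ hK.measurableSet]
  by_cases hne : ∃ γ₀ : latticeGamma n, g * (γ₀ : SLR n) ∈ K
  · obtain ⟨γ₀, h0⟩ := hne
    rw [← Equiv.tsum_eq (Equiv.mulLeft γ₀), tsum_eq_sum (s := hfin.toFinset)]
    · refine (Finset.sum_le_card_nsmul _ _ 1 fun γ _ => ?_).trans (by simp)
      exact Set.indicator_le_self' (by simp) _
    · intro γ hγ
      refine Set.indicator_of_notMem (fun hmem => hγ ?_) _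
      rw [Set.Finite.mem_toFinset]
      refine ⟨(g * γ₀)⁻¹, by simpa using h0, _, hmem, ?_⟩
      simp [mul_assoc]
  · have : ∀ γ : latticeGamma n, K.indicator (1 : SLR n → ℝ≥0∞) (g * (γ : SLR n)) = 0 :=
      fun γ => Set.indicator_of_notMem (fun h => hne ⟨γ, h⟩) _
    simp [this]

theorem isFiniteMeasureOnCompacts_orbitAverage [IsFiniteMeasure μ] :
    IsFiniteMeasureOnCompacts (latticeAverage μ orbitMeasure) := by
  refine ⟨fun K hK => ?_⟩
  obtain ⟨N, hN⟩ := exists_orbitMeasure_le hK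
  rw [latticeAverage_apply measurable_orbitMeasure orbitMeasure_mul_mem hK.measurableSet]
  refine (lintegral_mono fun Λ => hN _).trans_lt ?_
  rw [lintegral_const]
  exact ENNReal.mul_lt_top (ENNReal.natCast_lt_top N) (measure_lt_top _ _)

end Average

/-! ### Haar measure on `SL(n, ℝ)` as a cone measure -/

section ConeMeasure

variable {n : ℕ}

/-- The columns of a matrix. -/
def cols (g : SLR n) : Fin n → Fin n → ℝ := fun i j => (g : Matrix (Fin n) (Fin n) ℝ) j i

theorem isClosedEmbedding_cols : Topology.IsClosedEmbedding (cols (n := n)) := by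
  let e : Matrix (Fin n) (Fin n) ℝ ≃ₜ (Fin n → Fin n → ℝ) :=
    { toFun := fun A i j => A j i
      invFun := fun C => Matrix.of fun i j => C j i
      left_inv := fun _ => rfl
      right_inv := fun _ => rfl
      continuous_toFun := Continuous.matrix_transpose continuous_id
      continuous_invFun :=
        Continuous.matrix_transpose (continuous_id (X := Matrix (Fin n) (Fin n) ℝ)) }
  exact e.isClosedEmbedding.comp SLR.isClosedEmbedding_coe

theorem det_cols (g : SLR n) : (Matrix.of (cols g)).det = 1 := by
  have : Matrix.of (cols g) = (g : Matrix (Fin n) (Fin n) ℝ)ᵀ := rfl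
  rw [this, Matrix.det_transpose, g.det_coe]

theorem cols_mul (h g : SLR n) :
    cols (h * g) = fun i => (h : Matrix (Fin n) (Fin n) ℝ) *ᵥ cols g i := by
  ext i j
  simp [cols, Matrix.mul_apply, Matrix.mulVec, dotProduct]

theorem cols_mul_map (g : SLR n) (γ : Matrix.SpecialLinearGroup (Fin n) ℤ) :
    cols (g * Matrix.SpecialLinearGroup.map (Int.castRingHom ℝ) γ) =
      intMul (γ.transpose : Matrix.SpecialLinearGroup (Fin n) ℤ) (cols g) := by
  ext i j
  simp [cols, intMul, Matrix.mul_apply, mul_comm]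

theorem det_of_mulVec (h : SLR n) (C : Fin n → Fin n → ℝ) :
    (Matrix.of fun i => (h : Matrix (Fin n) (Fin n) ℝ) *ᵥ C i).det = (Matrix.of C).det := by
  have : (Matrix.of fun i => (h : Matrix (Fin n) (Fin n) ℝ) *ᵥ C i) =
      Matrix.of C * (h : Matrix (Fin n) (Fin n) ℝ)ᵀ := by
    ext i j
    simp [Matrix.mul_apply, Matrix.mulVec, dotProduct, mul_comm]
  rw [this, Matrix.det_mul, Matrix.det_transpose, h.det_coe, mul_one]

theorem measurePreserving_mulVec (h : SLR n) :
    MeasurePreserving (fun x : Fin n → ℝ => (h : Matrix (Fin n) (Fin n) ℝ) *ᵥ x)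
      volume volume := by
  have h1 := Real.map_matrix_volume_pi_eq_smul_volume_pi
    (M := (h : Matrix (Fin n) (Fin n) ℝ)) (by rw [h.det_coe]; exact one_ne_zero)
  rw [h.det_coe] at h1
  refine ⟨(continuous_const.matrix_mulVec continuous_id).measurable, ?_⟩
  rw [inv_one, abs_one, ENNReal.ofReal_one, one_smul] at h1
  exact h1

theorem measurePreserving_mulVec_rows (h : SLR n) :
    MeasurePreserving (fun (C : Fin n → Fin n → ℝ) i => (h : Matrix (Fin n) (Fin n) ℝ) *ᵥ C i)
      volume volume :=
  volume_preserving_pi fun _ => measurePreserving_mulVec h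

/-- The tuples with determinant in `(0, 1]`. -/
def unitDet (n : ℕ) : Set (Fin n → Fin n → ℝ) := {C | 0 < (Matrix.of C).det ∧ (Matrix.of C).det ≤ 1}

theorem measurableSet_unitDet : MeasurableSet (unitDet n) :=
  (measurableSet_lt measurable_const measurable_det_of).inter
    (measurableSet_le measurable_det_of measurable_const)

theorem det_of_smul_rpow [NeZero n] {C : Fin n → Fin n → ℝ} (h : 0 < (Matrix.of C).det) :
    (((Matrix.of C).det ^ (-(1 / (n : ℝ)))) • (Matrix.of C)ᵀ).det = 1 := by
  have hn : (n : ℝ) ≠ 0 := Nat.cast_ne_zero.mpr (NeZero.ne n)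
  rw [Matrix.det_smul, Matrix.det_transpose, Fintype.card_fin, ← Real.rpow_natCast,
    ← Real.rpow_mul h.le, neg_mul, one_div, inv_mul_cancel₀ hn, Real.rpow_neg_one,
    inv_mul_cancel₀ h.ne']

open Classical in
/-- The unimodular matrix with columns proportional to a given tuple. -/
def unimodularize [NeZero n] (C : Fin n → Fin n → ℝ) : SLR n :=
  if h : 0 < (Matrix.of C).det then ⟨_, det_of_smul_rpow h⟩ else 1

theorem cols_unimodularize [NeZero n] {C : Fin n → Fin n → ℝ} (h : 0 < (Matrix.of C).det) :
    cols (unimodularize C) = ((Matrix.of C).det ^ (-(1 / (n : ℝ)))) • C := by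
  ext i j
  simp [cols, unimodularize, h]

theorem smul_cols_unimodularize [NeZero n] {C : Fin n → Fin n → ℝ} (h : 0 < (Matrix.of C).det) :
    ((Matrix.of C).det ^ (1 / (n : ℝ))) • cols (unimodularize C) = C := by
  rw [cols_unimodularize h, smul_smul, ← Real.rpow_add h, add_neg_cancel, Real.rpow_zero, one_smul]

theorem measurable_unimodularize [NeZero n] : Measurable (unimodularize (n := n)) := by
  rw [← (isClosedEmbedding_cols (n := n)).measurableEmbedding.measurable_comp_iff]
  have e : cols ∘ unimodularize (n := n) = fun C : Fin n → Fin n → ℝ =>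
      Set.indicator {C : Fin n → Fin n → ℝ | 0 < (Matrix.of C).det}
        (fun C => ((Matrix.of C).det ^ (-(1 / (n : ℝ)))) • C - cols 1) C + cols 1 := by
    ext1 C
    by_cases h : 0 < (Matrix.of C).det
    · rw [Set.indicator_of_mem (by exact h)]
      simp [cols_unimodularize h]
    · rw [Set.indicator_of_notMem (by exact h)]
      simp [unimodularize, h]
  rw [e]
  refine Measurable.add_const (Measurable.indicator ?_
    (measurableSet_lt measurable_const measurable_det_of)) _
  exact ((measurable_det_of.pow_const _).smul measurable_id).sub_const _

theorem mul_unimodularize [NeZero n] (g : SLR n) {C : Fin n → Fin n → ℝ}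
    (h : 0 < (Matrix.of C).det) : g * unimodularize C =
      unimodularize fun i => (g : Matrix (Fin n) (Fin n) ℝ) *ᵥ C i := by
  apply (isClosedEmbedding_cols (n := n)).injective
  rw [cols_mul, cols_unimodularize h, cols_unimodularize (by rwa [det_of_mulVec]), det_of_mulVec]
  ext1 i
  simp [Matrix.mulVec_smul]

/-- The image of Lebesgue measure on tuples with determinant in `(0, 1]`. -/
def coneMeasure (n : ℕ) [NeZero n] : Measure (SLR n) :=
  (volume.restrict (unitDet n)).map unimodularize

theorem coneMeasure_apply [NeZero n] {s : Set (SLR n)} (hs : MeasurableSet s) :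
    coneMeasure n s = volume (unimodularize ⁻¹' s ∩ unitDet n) := by
  rw [coneMeasure, Measure.map_apply measurable_unimodularize hs,
    Measure.restrict_apply (measurable_unimodularize hs)]

instance [NeZero n] : (coneMeasure n).IsMulLeftInvariant := by
  refine ⟨fun g => Measure.ext fun s hs => ?_⟩
  have hg : Measurable fun x : SLR n => g * x := (continuous_const_mul g).measurable
  rw [Measure.map_apply hg hs, coneMeasure_apply (hg hs), coneMeasure_apply hs,
    ← (measurePreserving_mulVec_rows g).measure_preimage
      ((measurable_unimodularize hs).inter measurableSet_unitDet).nullMeasurableSet]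
  congr 1
  ext C
  simp only [unitDet, Set.mem_inter_iff, Set.mem_preimage, Set.mem_ofPred_eq, det_of_mulVec]
  refine and_congr_left fun h => ?_
  rw [mul_unimodularize g h.1]

theorem norm_le_of_unitDet [NeZero n] {C : Fin n → Fin n → ℝ} (h : C ∈ unitDet n) (i : Fin n) :
    ‖C i‖ ≤ ‖cols (unimodularize C) i‖ := by
  conv_lhs => rw [← smul_cols_unimodularize h.1]
  rw [Pi.smul_apply, norm_smul, Real.norm_of_nonneg (Real.rpow_nonneg h.1.le _)]
  exact mul_le_of_le_one_left (norm_nonneg _) (Real.rpow_le_one h.1.le h.2 (by positivity))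

instance [NeZero n] : IsFiniteMeasureOnCompacts (coneMeasure n) := by
  refine ⟨fun K hK => ?_⟩
  rw [coneMeasure_apply hK.measurableSet]
  obtain ⟨R, hR⟩ := (hK.image isClosedEmbedding_cols.continuous).isBounded.exists_norm_le
  refine (measure_mono (t := Metric.closedBall 0 R) fun C hC => ?_).trans_lt
    (isCompact_closedBall _ _).measure_lt_top
  have h1 := hR _ ⟨_, hC.1, rfl⟩
  rw [mem_closedBall_zero_iff, pi_norm_le_iff_of_nonneg ((norm_nonneg _).trans h1)]
  exact fun i => (norm_le_of_unitDet hC.2 i).trans ((norm_le_pi_norm _ i).trans h1)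

theorem coneMeasure_ne_zero [NeZero n] : coneMeasure n ≠ 0 := by
  intro h0
  have h1 : coneMeasure n Set.univ = 0 := by rw [h0]; rfl
  rw [coneMeasure_apply MeasurableSet.univ, Set.preimage_univ, Set.univ_inter] at h1
  have hopen : IsOpen {C : Fin n → Fin n → ℝ | (Matrix.of C).det ∈ Set.Ioo (0 : ℝ) 1} := by
    have hc : Continuous fun C : Fin n → Fin n → ℝ => (Matrix.of C).det := by
      have : Continuous fun C : Fin n → Fin n → ℝ => (Matrix.of C : Matrix (Fin n) (Fin n) ℝ) :=
        continuous_id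
      exact this.matrix_det
    exact isOpen_Ioo.preimage hc
  have hne : {C : Fin n → Fin n → ℝ | (Matrix.of C).det ∈ Set.Ioo (0 : ℝ) 1}.Nonempty := by
    refine ⟨((2 : ℝ)⁻¹ • (1 : Matrix (Fin n) (Fin n) ℝ) : Matrix (Fin n) (Fin n) ℝ), ?_⟩
    change ((2 : ℝ)⁻¹ • (1 : Matrix (Fin n) (Fin n) ℝ)).det ∈ Set.Ioo (0 : ℝ) 1
    rw [Matrix.det_smul, Matrix.det_one, mul_one, Fintype.card_fin]
    exact ⟨by positivity, pow_lt_one₀ (by norm_num) (by norm_num) (NeZero.ne n)⟩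
  refine (hopen.measure_pos volume hne).ne' (measure_mono_null ?_ h1)
  exact fun C hC => ⟨hC.1, hC.2.le⟩

/-- A left invariant, locally finite measure on `SL(n, ℝ)` is a multiple of the cone measure. -/
theorem exists_eq_smul_coneMeasure [NeZero n] (m : Measure (SLR n)) [IsFiniteMeasureOnCompacts m]
    [m.IsMulLeftInvariant] : ∃ c : ℝ≥0∞, c ≠ ⊤ ∧ m = c • coneMeasure n := by
  have h1 := Measure.isMulLeftInvariant_eq_smul m Measure.haar
  have h2 := Measure.isMulLeftInvariant_eq_smul (coneMeasure n) Measure.haar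
  set a := m.haarScalarFactor Measure.haar
  set b := (coneMeasure n).haarScalarFactor Measure.haar
  have hb : b ≠ 0 := by
    intro hb
    rw [hb, zero_smul] at h2
    exact coneMeasure_ne_zero h2
  refine ⟨(a / b : NNReal), ENNReal.coe_ne_top, ?_⟩
  change m = (a / b : NNReal) • coneMeasure n
  rw [h1, h2, smul_smul, div_mul_cancel₀ _ hb]

end ConeMeasure

/-! ### Local finiteness of the average of the lattice measures -/

section LocalFiniteness

variable {n : ℕ}

/-- The unimodular matrices with columns in a given cone and first column of bounded norm. -/
def reducedSet (S : Set (Fin (n + 1) → Fin (n + 1) → ℝ)) (r : ℝ) : Set (SLR (n + 1)) :=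
  {g | cols g ∈ S ∧ ‖cols g 0‖ ≤ r}

theorem measurableSet_reducedSet {S : Set (Fin (n + 1) → Fin (n + 1) → ℝ)} (hS : MeasurableSet S)
    (r : ℝ) : MeasurableSet (reducedSet S r) := by
  refine MeasurableSet.inter (isClosedEmbedding_cols.continuous.measurable hS) ?_
  exact measurableSet_le ((measurable_pi_apply 0).comp
    isClosedEmbedding_cols.continuous.measurable).norm measurable_const

/-- Every nonzero lattice vector is a multiple of the first vector of a reduced basis. -/
theorem exists_reduced_basis {S : Set (Fin (n + 1) → Fin (n + 1) → ℝ)}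
    (hS : ∀ C : Fin (n + 1) → Fin (n + 1) → ℝ, (Matrix.of C).det ≠ 0 →
      ∃ γ : Matrix.SpecialLinearGroup (Fin (n + 1)) ℤ, intMul γ C 0 = C 0 ∧ intMul γ C ∈ S)
    (g : SLR (n + 1)) (m : {m : Fin (n + 1) → ℤ // m ≠ 0}) :
    ∃ (k : {k : ℤ // k ≠ 0}) (γ : latticeGamma (n + 1)),
      cols (g * (γ : SLR (n + 1))) ∈ S ∧
        vecOf (n + 1) g m.1 = (k.1 : ℝ) • cols (g * (γ : SLR (n + 1))) 0 := by
  obtain ⟨γ, k, hk, hγ⟩ := exists_eq_smul_mulVec_single m.1 m.2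
  let φ := Matrix.SpecialLinearGroup.map (n := Fin (n + 1)) (Int.castRingHom ℝ)
  obtain ⟨δ, h1, h2⟩ := hS (cols (g * φ γ)) (by rw [det_cols]; exact one_ne_zero)
  have hcols : cols (g * φ (γ * δ.transpose)) = intMul δ (cols (g * φ γ)) := by
    rw [map_mul, ← mul_assoc, cols_mul_map]
    rfl
  refine ⟨⟨k, hk⟩, ⟨φ (γ * δ.transpose), ⟨_, rfl⟩⟩, ?_, ?_⟩
  · change cols (g * φ (γ * δ.transpose)) ∈ S
    rwa [hcols]
  · change _ = (k : ℝ) • cols (g * φ (γ * δ.transpose)) 0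
    rw [hcols, h1, hγ, ← vecOf_mul_map]
    ext i
    simp only [vecOf, cols, Matrix.mulVec, dotProduct, Pi.smul_apply, smul_eq_mul]
    rw [Finset.sum_eq_single 0]
    · rw [Pi.single_eq_same, mul_comm]
    · intro j _ hj
      simp [Pi.single_eq_of_ne hj]
    · simp

theorem latticeMeasure_closedBall_le {S : Set (Fin (n + 1) → Fin (n + 1) → ℝ)}
    (hSm : MeasurableSet S)
    (hS : ∀ C : Fin (n + 1) → Fin (n + 1) → ℝ, (Matrix.of C).det ≠ 0 →
      ∃ γ : Matrix.SpecialLinearGroup (Fin (n + 1)) ℤ, intMul γ C 0 = C 0 ∧ intMul γ C ∈ S)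
    (g : SLR (n + 1)) (ρ : ℝ) :
    latticeMeasure g (Metric.closedBall 0 ρ) ≤
      ∑' k : {k : ℤ // k ≠ 0}, orbitMeasure g (reducedSet S (ρ / |(k.1 : ℝ)|)) := by
  choose k γ h1 h2 using exists_reduced_basis hS g
  have hinj : Function.Injective fun m => (k m, γ m) := by
    intro m m' h
    have hk : k m = k m' := congrArg Prod.fst h
    have hγ : γ m = γ m' := congrArg Prod.snd h
    apply Subtype.ext
    apply vecOf_injective g
    rw [h2, h2, hk, hγ]
  rw [latticeMeasure, pointMeasure_apply _ Metric.isClosed_closedBall.measurableSet]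
  simp only [orbitMeasure, pointMeasure_apply _ (measurableSet_reducedSet hSm _)]
  rw [← ENNReal.tsum_prod (f := fun (k : {k : ℤ // k ≠ 0}) (γ : latticeGamma (n + 1)) =>
    (reducedSet S (ρ / |(k.1 : ℝ)|)).indicator (1 : SLR (n + 1) → ℝ≥0∞) (g * (γ : SLR (n + 1))))]
  refine le_trans (ENNReal.tsum_le_tsum fun m => ?_) (ENNReal.tsum_comp_le_tsum_of_injective hinj _)
  by_cases hm : vecOf (n + 1) g m.1 ∈ Metric.closedBall (0 : Fin (n + 1) → ℝ) ρ
  · rw [Set.indicator_of_mem hm, Set.indicator_of_mem]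
    · rfl
    · refine ⟨h1 m, ?_⟩
      have hk : (0 : ℝ) < |((k m).1 : ℝ)| := abs_pos.mpr (Int.cast_ne_zero.mpr (k m).2)
      rw [mem_closedBall_zero_iff, h2, norm_smul, Real.norm_eq_abs] at hm
      rw [le_div_iff₀ hk, mul_comm]
      exact hm
  · rw [Set.indicator_of_notMem hm]
    exact zero_le

theorem coneMeasure_reducedSet_le {S : Set (Fin (n + 1) → Fin (n + 1) → ℝ)}
    (hSm : MeasurableSet S) (hcone : ∀ t : ℝ, 0 < t → ∀ C ∈ S, t • C ∈ S) (r : ℝ) :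
    coneMeasure (n + 1) (reducedSet S r) ≤
      volume (S ∩ {C | ‖C 0‖ ≤ r ∧ |(Matrix.of C).det| ≤ 1}) := by
  rw [coneMeasure_apply (measurableSet_reducedSet hSm r)]
  refine measure_mono ?_
  rintro C ⟨⟨h1, h2⟩, h3⟩
  refine ⟨?_, (norm_le_of_unitDet h3 0).trans h2, ?_⟩
  · rw [← smul_cols_unimodularize h3.1]
    exact hcone _ (Real.rpow_pos_of_pos h3.1 _) _ h1
  · rw [abs_of_pos h3.1]
    exact h3.2

theorem isFiniteMeasureOnCompacts_latticeAverage (hn : 1 ≤ n) {μ : Measure (LatticeSpace (n + 1))}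
    [IsFiniteMeasure μ]
    (hμ : ∀ (g : SLR (n + 1)) (s : Set (LatticeSpace (n + 1))),
      μ ((fun x => g • x) ⁻¹' s) = μ s) :
    IsFiniteMeasureOnCompacts (latticeAverage μ latticeMeasure) := by
  obtain ⟨S, hSm, hcone, hS, K, hK0, hK⟩ := (hasReductionCone n).relative
  have hfin := isFiniteMeasureOnCompacts_orbitAverage (μ := μ)
  have hinv : (latticeAverage μ orbitMeasure).IsMulLeftInvariant :=
    ⟨fun h => map_latticeAverage hμ measurable_orbitMeasure orbitMeasure_mul_mem h
      (continuous_const_mul h).measurable (map_orbitMeasure h)⟩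
  obtain ⟨c, hc, hcm⟩ := exists_eq_smul_coneMeasure (latticeAverage μ orbitMeasure)
  have hball : ∀ ρ : ℝ, 0 < ρ →
      latticeAverage μ latticeMeasure (Metric.closedBall (0 : Fin (n + 1) → ℝ) ρ) < ⊤ := by
    intro ρ hρ
    calc latticeAverage μ latticeMeasure (Metric.closedBall (0 : Fin (n + 1) → ℝ) ρ)
        = ∫⁻ Λ, latticeMeasure Λ.out (Metric.closedBall (0 : Fin (n + 1) → ℝ) ρ) ∂μ :=
          latticeAverage_apply measurable_latticeMeasure latticeMeasure_mul_mem
            Metric.isClosed_closedBall.measurableSet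
      _ ≤ ∫⁻ Λ, ∑' k : {k : ℤ // k ≠ 0},
            orbitMeasure Λ.out (reducedSet S (ρ / |(k.1 : ℝ)|)) ∂μ :=
          lintegral_mono fun Λ => latticeMeasure_closedBall_le hSm hS Λ.out ρ
      _ = ∑' k : {k : ℤ // k ≠ 0},
            latticeAverage μ orbitMeasure (reducedSet S (ρ / |(k.1 : ℝ)|)) := by
          rw [lintegral_tsum]
          · exact tsum_congr fun k => (latticeAverage_apply measurable_orbitMeasure
              orbitMeasure_mul_mem (measurableSet_reducedSet hSm _)).symm
          · intro k
            exact ((Measure.measurable_coe (measurableSet_reducedSet hSm _)).comp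
              (measurable_out_of_invariant measurable_orbitMeasure
                orbitMeasure_mul_mem)).aemeasurable
      _ ≤ ∑' k : {k : ℤ // k ≠ 0},
            c * ENNReal.ofReal (K * 1 ^ n * (ρ / |(k.1 : ℝ)|) ^ (n + 1)) := by
          refine ENNReal.tsum_le_tsum fun k => ?_
          have hk : (0 : ℝ) < |(k.1 : ℝ)| := abs_pos.mpr (Int.cast_ne_zero.mpr k.2)
          rw [hcm, Measure.smul_apply, smul_eq_mul]
          gcongr
          exact (coneMeasure_reducedSet_le hSm hcone _).trans (hK 1 _ one_pos (by positivity))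
      _ < ⊤ := by
          rw [ENNReal.tsum_mul_left]
          refine ENNReal.mul_lt_top hc.lt_top ?_
          have hs : Summable fun k : {k : ℤ // k ≠ 0} =>
              K * 1 ^ n * (ρ / |(k.1 : ℝ)|) ^ (n + 1) := by
            have h1 : Summable fun k : ℤ => 1 / |(k : ℝ)| ^ (n + 1) := by
              have := (Real.summable_one_div_int_pow (p := n + 1)).mpr (by omega)
              simpa [abs_div, abs_pow] using this.abs
            have h2 := (h1.mul_left (K * 1 ^ n * ρ ^ (n + 1))).subtype {k : ℤ | k ≠ 0}
            refine h2.congr fun k => ?_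
            simp only [Function.comp_apply]
            rw [div_pow]
            ring
          rw [← ENNReal.ofReal_tsum_of_nonneg (fun k => by positivity) hs]
          exact ENNReal.ofReal_lt_top
  refine ⟨fun A hA => ?_⟩
  obtain ⟨R, hR⟩ := hA.isBounded.exists_norm_le
  refine (measure_mono fun x hx => ?_).trans_lt (hball (max R 1) (by positivity))
  rw [mem_closedBall_zero_iff]
  exact (hR x hx).trans (le_max_left _ _)

end LocalFiniteness

/-! ### Counting lattice points in large cubes -/

section Counting

variable {n : ℕ}

/-- The counting measure of the lattice `g ℤⁿ`. -/
def fullLatticeMeasure (g : SLR n) : Measure (Fin n → ℝ) := pointMeasure (vecOf n g)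

theorem fullLatticeMeasure_apply (g : SLR n) {s : Set (Fin n → ℝ)} (hs : MeasurableSet s) :
    fullLatticeMeasure g s = s.indicator 1 0 + latticeMeasure g s := by
  rw [fullLatticeMeasure, latticeMeasure, pointMeasure_apply _ hs, pointMeasure_apply _ hs,
    ENNReal.tsum_eq_add_tsum_ite 0]
  congr 1
  · congr 1
    ext i
    simp [vecOf, Matrix.mulVec, dotProduct]
  · rw [← tsum_subtype_eq_of_support_subset (s := {m : Fin n → ℤ | m ≠ 0})]
    · refine tsum_congr fun m => ?_
      rw [if_neg m.2]
    · intro m hm h0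
      simp [h0] at hm

theorem fullLatticeMeasure_eq_encard (g : SLR n) {s : Set (Fin n → ℝ)} (hs : MeasurableSet s) :
    fullLatticeMeasure g s = ({m | vecOf n g m ∈ s} : Set (Fin n → ℤ)).encard := by
  rw [fullLatticeMeasure, pointMeasure_apply _ hs, ← ENNReal.tsum_set_one]
  exact (tsum_subtype {m | vecOf n g m ∈ s} fun _ => (1 : ℝ≥0∞)).symm

theorem vecOf_add (g : SLR n) (m m' : Fin n → ℤ) :
    vecOf n g (m + m') = vecOf n g m + vecOf n g m' := by
  rw [vecOf, vecOf, vecOf, ← Matrix.mulVec_add]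
  congr 1
  ext i
  simp

/-- The cube `[0, R)ⁿ`. -/
def cube (n : ℕ) (R : ℝ) : Set (Fin n → ℝ) := Set.univ.pi fun _ => Set.Ico 0 R

theorem measurableSet_cube (R : ℝ) : MeasurableSet (cube n R) :=
  MeasurableSet.univ_pi fun _ => measurableSet_Ico

theorem volume_cube (R : ℕ) : volume (cube n R) = (R : ℝ≥0∞) ^ n := by
  rw [cube, volume_pi_pi]
  simp

theorem fullLatticeMeasure_unitCube_le (g : SLR n) (a : Fin n → ℝ) :
    fullLatticeMeasure g (Set.univ.pi fun i => Set.Ico (a i) (a i + 1)) ≤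
      fullLatticeMeasure g (Metric.closedBall 0 1) := by
  have hm : MeasurableSet (Set.univ.pi fun i => Set.Ico (a i) (a i + 1)) :=
    MeasurableSet.univ_pi fun _ => measurableSet_Ico
  rw [fullLatticeMeasure, pointMeasure_apply _ hm,
    pointMeasure_apply _ Metric.isClosed_closedBall.measurableSet]
  by_cases hne : ∃ m₀, vecOf n g m₀ ∈ Set.univ.pi fun i => Set.Ico (a i) (a i + 1)
  · obtain ⟨m₀, h0⟩ := hne
    rw [← Equiv.tsum_eq (Equiv.addRight m₀) fun m =>
      (Set.univ.pi fun i => Set.Ico (a i) (a i + 1)).indicator (1 : (Fin n → ℝ) → ℝ≥0∞)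
        (vecOf n g m)]
    refine ENNReal.tsum_le_tsum fun m => ?_
    rw [Equiv.coe_addRight, vecOf_add]
    by_cases hx : vecOf n g m + vecOf n g m₀ ∈ Set.univ.pi fun i => Set.Ico (a i) (a i + 1)
    · have hball : vecOf n g m ∈ Metric.closedBall (0 : Fin n → ℝ) 1 := by
        rw [mem_closedBall_zero_iff, pi_norm_le_iff_of_nonneg zero_le_one]
        intro i
        have h1 := hx i trivial
        have h2 := h0 i trivial
        rw [Pi.add_apply] at h1
        rw [Real.norm_eq_abs, abs_le]
        constructor <;> linarith [h1.1, h1.2, h2.1, h2.2]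
      rw [Set.indicator_of_mem hx, Set.indicator_of_mem hball]
      rfl
    · rw [Set.indicator_of_notMem hx]
      exact zero_le
  · have : ∀ m, (Set.univ.pi fun i => Set.Ico (a i) (a i + 1)).indicator
        (1 : (Fin n → ℝ) → ℝ≥0∞) (vecOf n g m) = 0 :=
      fun m => Set.indicator_of_notMem (fun h => hne ⟨m, h⟩) _
    simp [this]

theorem fullLatticeMeasure_cube_le (g : SLR n) (R : ℕ) :
    fullLatticeMeasure g (cube n R) ≤
      (R : ℝ≥0∞) ^ n * fullLatticeMeasure g (Metric.closedBall 0 1) := by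
  have hsub : cube n R ⊆ ⋃ a : Fin n → Fin R,
      Set.univ.pi fun i => Set.Ico ((a i : ℕ) : ℝ) ((a i : ℕ) + 1) := by
    intro x hx
    have hx' : ∀ i, 0 ≤ x i ∧ x i < R := fun i => hx i trivial
    refine Set.mem_iUnion.mpr ⟨fun i => ⟨⌊x i⌋₊, (Nat.floor_lt (hx' i).1).mpr (hx' i).2⟩,
      fun i _ => ⟨Nat.floor_le (hx' i).1, Nat.lt_floor_add_one _⟩⟩
  refine (measure_mono hsub).trans ((measure_iUnion_fintype_le _ _).trans ?_)
  refine (Finset.sum_le_card_nsmul _ _ _ fun a _ => fullLatticeMeasure_unitCube_le g _).trans ?_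
  simp

open Pointwise in
theorem tendsto_fullLatticeMeasure_cube (g : SLR n) :
    Tendsto (fun R : ℕ => fullLatticeMeasure g (cube n (R + 1 : ℕ)) / ((R + 1 : ℕ) : ℝ≥0∞) ^ n)
      atTop (nhds 1) := by
  set s := (fun x : Fin n → ℝ => (g : Matrix (Fin n) (Fin n) ℝ) *ᵥ x) ⁻¹' cube n 1 with hs
  have hcont : Continuous fun x : Fin n → ℝ => (g : Matrix (Fin n) (Fin n) ℝ) *ᵥ x :=
    continuous_const.matrix_mulVec continuous_id
  have hsm : MeasurableSet s := hcont.measurable (measurableSet_cube 1)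
  have hvol : volume.real s = 1 := by
    rw [Measure.real, (measurePreserving_mulVec g).measure_preimage
      (measurableSet_cube 1).nullMeasurableSet]
    simpa using congrArg ENNReal.toReal (volume_cube (n := n) 1)
  have hconv : Convex ℝ s := by
    have : Convex ℝ (cube n 1) := convex_pi fun i _ => convex_Ico _ _
    exact this.linear_preimage (Matrix.toLin' (g : Matrix (Fin n) (Fin n) ℝ))
  have hbdd : ∀ r : ℝ, Bornology.IsBounded
      ((fun x : Fin n → ℝ => (g : Matrix (Fin n) (Fin n) ℝ) *ᵥ x) ⁻¹' cube n r) := by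
    intro r
    have hc : Continuous fun x : Fin n → ℝ =>
        ((g⁻¹ : SLR n) : Matrix (Fin n) (Fin n) ℝ) *ᵥ x :=
      continuous_const.matrix_mulVec continuous_id
    refine (((isCompact_closedBall (0 : Fin n → ℝ) |r|).image hc).isBounded).subset ?_
    intro x hx
    refine ⟨(g : Matrix (Fin n) (Fin n) ℝ) *ᵥ x, ?_, ?_⟩
    · rw [mem_closedBall_zero_iff, pi_norm_le_iff_of_nonneg (abs_nonneg r)]
      intro i
      have := hx i trivial
      rw [Real.norm_eq_abs, abs_of_nonneg this.1]
      exact this.2.le.trans (le_abs_self r)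
    · simp only [Matrix.mulVec_mulVec, ← Matrix.SpecialLinearGroup.coe_mul, inv_mul_cancel,
        Matrix.SpecialLinearGroup.coe_one, Matrix.one_mulVec]
  have hlim := (tendsto_card_div_pow_atTop_volume s (hbdd 1) hsm
    (hconv.addHaar_frontier volume)).comp (tendsto_add_atTop_nat 1)
  rw [hvol] at hlim
  have hlim2 := (ENNReal.continuous_ofReal.tendsto 1).comp hlim
  rw [ENNReal.ofReal_one] at hlim2
  refine hlim2.congr fun R => ?_
  simp only [Function.comp_apply, Fintype.card_fin]
  rw [fullLatticeMeasure_eq_encard g (measurableSet_cube _)]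
  set M : Set (Fin n → ℤ) := {m | vecOf n g m ∈ cube n (R + 1 : ℕ)}
  have hspan : ∀ x : Fin n → ℝ, x ∈ Submodule.span ℤ (Set.range (Pi.basisFun ℝ (Fin n))) ↔
      ∃ m : Fin n → ℤ, (fun i => (m i : ℝ)) = x := by
    intro x
    rw [Module.Basis.mem_span_iff_repr_mem]
    simp only [Pi.basisFun_repr, algebraMap_int_eq, Set.mem_range, eq_intCast]
    exact ⟨fun h => ⟨fun i => (h i).choose, funext fun i => (h i).choose_spec⟩,
      fun ⟨m, hm⟩ i => ⟨m i, congrFun hm i⟩⟩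
  have hinj : Function.Injective fun (m : Fin n → ℤ) (i : Fin n) => (m i : ℝ) := fun m m' h =>
    funext fun i => Int.cast_injective (congrFun h i)
  have hMfin : M.Finite := by
    refine ((ZSpan.setFinite_inter (Pi.basisFun ℝ (Fin n)) (hbdd (R + 1 : ℕ))).preimage
      hinj.injOn).subset fun m hm => ⟨hm, (hspan _).mpr ⟨m, rfl⟩⟩
  have hR : ((R + 1 : ℕ) : ℝ) ≠ 0 := by positivity
  have hcard : Nat.card ↑(s ∩ ((R + 1 : ℕ) : ℝ)⁻¹ •
      (Submodule.span ℤ (Set.range (Pi.basisFun ℝ (Fin n))) : Set (Fin n → ℝ))) = M.ncard := by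
    rw [← Set.ncard_image_of_injective M
      ((smul_right_injective (Fin n → ℝ) (inv_ne_zero hR)).comp hinj), Nat.card_coe_set_eq]
    congr 1
    have hscale : ∀ m : Fin n → ℤ,
        (((R + 1 : ℕ) : ℝ)⁻¹ • fun i => (m i : ℝ)) ∈ s ↔ m ∈ M := by
      intro m
      change (g : Matrix (Fin n) (Fin n) ℝ) *ᵥ _ ∈ cube n 1 ↔ vecOf n g m ∈ cube n _
      rw [Matrix.mulVec_smul, ← vecOf]
      have hpos : (0 : ℝ) < (R + 1 : ℕ) := by positivity
      simp only [cube, Set.mem_univ_pi, Set.mem_Ico, Pi.smul_apply, smul_eq_mul]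
      refine forall_congr' fun i => and_congr ?_ ?_
      · rw [mul_nonneg_iff_of_pos_left (inv_pos.mpr hpos)]
      · rw [inv_mul_lt_iff₀ hpos, mul_one]
    ext x
    simp only [Set.mem_inter_iff, Set.mem_smul_set, SetLike.mem_coe, hspan, Set.mem_image,
      Function.comp_apply]
    constructor
    · rintro ⟨hx, _, ⟨m, rfl⟩, rfl⟩
      exact ⟨m, (hscale m).mp hx, rfl⟩
    · rintro ⟨m, hm, rfl⟩
      exact ⟨(hscale m).mpr hm, _, ⟨m, rfl⟩, rfl⟩
  rw [hcard, ENNReal.ofReal_div_of_pos (by positivity), ENNReal.ofReal_pow (by positivity),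
    ENNReal.ofReal_natCast, ENNReal.ofReal_natCast, ← hMfin.cast_ncard_eq]
  rfl

end Counting

/-! ### The mean value formula -/

section MeanValue

variable {n : ℕ}

theorem latticeMeasure_singleton_zero (g : SLR n) : latticeMeasure g {0} = 0 := by
  rw [latticeMeasure, pointMeasure_apply _ (measurableSet_singleton 0), ENNReal.tsum_eq_zero]
  intro m
  refine Set.indicator_of_notMem (fun h => m.2 (vecOf_injective g ?_)) _
  rw [Set.mem_singleton_iff.mp h]
  simp [vecOf, ← Pi.zero_def]

theorem tendsto_latticeMeasure_cube (hn : n ≠ 0) (g : SLR n) :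
    Tendsto (fun R : ℕ => latticeMeasure g (cube n (R + 1 : ℕ)) / ((R + 1 : ℕ) : ℝ≥0∞) ^ n)
      atTop (nhds 1) := by
  have h0 : Tendsto (fun R : ℕ => (1 : ℝ≥0∞) / ((R + 1 : ℕ) : ℝ≥0∞) ^ n) atTop (nhds 0) := by
    have h1 := ((ENNReal.continuous_pow n).tendsto 0).comp
      (ENNReal.tendsto_inv_nat_nhds_zero.comp (tendsto_add_atTop_nat 1))
    rw [zero_pow hn] at h1
    refine h1.congr fun R => ?_
    simp only [Function.comp_apply]
    rw [one_div, ENNReal.inv_pow]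
  have h := ENNReal.Tendsto.sub (tendsto_fullLatticeMeasure_cube g) h0 (Or.inl ENNReal.one_ne_top)
  rw [tsub_zero] at h
  refine h.congr fun R => ?_
  have hmem : (0 : Fin n → ℝ) ∈ cube n (R + 1 : ℕ) := fun i _ =>
    ⟨le_rfl, by simpa using Nat.cast_add_one_pos (α := ℝ) R⟩
  rw [fullLatticeMeasure_apply g (measurableSet_cube _), Set.indicator_of_mem hmem,
    ENNReal.add_div, Pi.one_apply]
  refine ENNReal.add_sub_cancel_left (ENNReal.div_ne_top ENNReal.one_ne_top ?_)
  positivity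

/-- Siegel's mean value formula, as an identity of measures. -/
theorem latticeAverage_latticeMeasure (hn : 2 ≤ n) {μ : Measure (LatticeSpace n)}
    [IsProbabilityMeasure μ]
    (hμ : ∀ (g : SLR n) (s : Set (LatticeSpace n)), μ ((fun x => g • x) ⁻¹' s) = μ s) :
    latticeAverage μ latticeMeasure = volume := by
  obtain ⟨k, rfl⟩ : ∃ k, n = k + 1 := ⟨n - 1, by omega⟩
  have hfin := isFiniteMeasureOnCompacts_latticeAverage (by omega : 1 ≤ k) hμ
  have happly {s : Set (Fin (k + 1) → ℝ)} (hs : MeasurableSet s) :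
      latticeAverage μ latticeMeasure s = ∫⁻ Λ, latticeMeasure Λ.out s ∂μ :=
    latticeAverage_apply measurable_latticeMeasure latticeMeasure_mul_mem hs
  have hmeas {s : Set (Fin (k + 1) → ℝ)} (hs : MeasurableSet s) :
      Measurable fun Λ : LatticeSpace (k + 1) => latticeMeasure Λ.out s :=
    (Measure.measurable_coe hs).comp
      (measurable_out_of_invariant measurable_latticeMeasure latticeMeasure_mul_mem)
  obtain ⟨c, hc⟩ := exists_eq_smul_volume_of_shear_invariant
    (ν := latticeAverage μ latticeMeasure) hn
    (by simp [happly (measurableSet_singleton 0), latticeMeasure_singleton_zero])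
    (fun i j hij c => by
      have hT : Measurable fun x : Fin (k + 1) → ℝ => x + Pi.single i (c * x j) := by
        simp only [← shear_mulVec i j hij]
        exact (continuous_const.matrix_mulVec continuous_id).measurable
      refine ⟨hT, map_latticeAverage hμ measurable_latticeMeasure latticeMeasure_mul_mem
        (shear i j hij c) hT fun g => ?_⟩
      rw [← map_latticeMeasure]
      simp only [shear_mulVec])
  have hlim : Tendsto (fun R : ℕ => ∫⁻ Λ, latticeMeasure Λ.out (cube (k + 1) (R + 1 : ℕ)) /
      ((R + 1 : ℕ) : ℝ≥0∞) ^ (k + 1) ∂μ) atTop (nhds (∫⁻ _, 1 ∂μ)) := by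
    refine tendsto_lintegral_of_dominated_convergence
      (fun Λ => 1 + latticeMeasure Λ.out (Metric.closedBall 0 1))
      (fun R => (hmeas (measurableSet_cube _)).div_const _) (fun R => ae_of_all _ fun Λ => ?_) ?_
      (ae_of_all _ fun Λ => tendsto_latticeMeasure_cube k.succ_ne_zero Λ.out)
    · have h := fullLatticeMeasure_cube_le Λ.out (R + 1)
      rw [fullLatticeMeasure_apply _ (measurableSet_cube _),
        fullLatticeMeasure_apply _ Metric.isClosed_closedBall.measurableSet,
        Set.indicator_of_mem (Metric.mem_closedBall_self zero_le_one)] at h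
      exact ENNReal.div_le_of_le_mul' (le_add_self.trans h)
    · rw [lintegral_add_left measurable_const,
        ← happly Metric.isClosed_closedBall.measurableSet, lintegral_one, measure_univ]
      exact ENNReal.add_ne_top.mpr ⟨ENNReal.one_ne_top,
        (isCompact_closedBall (0 : Fin (k + 1) → ℝ) 1).measure_lt_top.ne⟩
  have hconst : ∀ R : ℕ, ∫⁻ Λ, latticeMeasure Λ.out (cube (k + 1) (R + 1 : ℕ)) /
      ((R + 1 : ℕ) : ℝ≥0∞) ^ (k + 1) ∂μ = c := by
    intro R
    simp only [div_eq_mul_inv]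
    rw [lintegral_mul_const _ (hmeas (measurableSet_cube _)), ← happly (measurableSet_cube _), hc,
      Measure.smul_apply, volume_cube, ENNReal.smul_def, smul_eq_mul, mul_assoc,
      ENNReal.mul_inv_cancel (by positivity) (by finiteness), mul_one]
  simp only [hconst, lintegral_one, measure_univ] at hlim
  have hc1 : (c : ℝ≥0∞) = 1 := tendsto_nhds_unique tendsto_const_nhds hlim
  rw [hc, ENNReal.coe_eq_one.mp hc1, one_smul]

end MeanValue

theorem integral_pointMeasure {ι Y : Type*} [Countable ι] [MeasurableSpace Y] (p : ι → Y)
    {f : Y → ℝ} (hf : Measurable f) (hfint : Integrable f (pointMeasure p)) :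
    ∫ y, f y ∂pointMeasure p = ∑' i, f (p i) := by
  rw [pointMeasure, integral_sum_measure hfint]
  exact tsum_congr fun i => integral_dirac' _ _ hf.stronglyMeasurable

/-- Fubini's theorem for the average of a family of measures. -/
theorem integral_latticeAverage {n : ℕ} {Y : Type*} [MeasurableSpace Y]
    {μ : Measure (LatticeSpace n)} {Ξ : SLR n → Measure Y} (hΞ : Measurable Ξ)
    (hΓ : ∀ g, ∀ γ ∈ latticeGamma n, Ξ (g * γ) = Ξ g) {f : Y → ℝ} (hf : Measurable f)
    (hfint : Integrable f (latticeAverage μ Ξ)) :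
    (∀ᵐ Λ : LatticeSpace n ∂μ, Integrable f (Ξ Λ.out)) ∧
      ∫ Λ : LatticeSpace n, ∫ y, f y ∂Ξ Λ.out ∂μ = ∫ y, f y ∂latticeAverage μ Ξ := by
  have hm {F : Y → ℝ≥0∞} (hF : Measurable F) :
      Measurable fun Λ : LatticeSpace n => ∫⁻ y, F y ∂Ξ Λ.out :=
    (Measure.measurable_lintegral hF).comp (measurable_out_of_invariant hΞ hΓ)
  have hae : ∀ᵐ Λ : LatticeSpace n ∂μ, Integrable f (Ξ Λ.out) := by
    have h := hfint.2
    rw [HasFiniteIntegral, lintegral_latticeAverage hΞ hΓ hf.enorm] at h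
    filter_upwards [ae_lt_top (hm hf.enorm) h.ne] with Λ hΛ
    exact ⟨hf.aestronglyMeasurable, hΛ⟩
  refine ⟨hae, ?_⟩
  have hpos := hf.ennreal_ofReal
  have hneg : Measurable fun y => ENNReal.ofReal (-f y) := hf.neg.ennreal_ofReal
  have hfinpos : ∫⁻ Λ : LatticeSpace n, ∫⁻ y, ENNReal.ofReal (f y) ∂Ξ Λ.out ∂μ ≠ ∞ := by
    rw [← lintegral_latticeAverage hΞ hΓ hpos]
    exact hfint.lintegral_lt_top.ne
  have hfinneg : ∫⁻ Λ : LatticeSpace n, ∫⁻ y, ENNReal.ofReal (-f y) ∂Ξ Λ.out ∂μ ≠ ∞ := by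
    rw [← lintegral_latticeAverage hΞ hΓ hneg]
    exact hfint.neg.lintegral_lt_top.ne
  rw [integral_eq_lintegral_pos_part_sub_lintegral_neg_part hfint,
    lintegral_latticeAverage hΞ hΓ hpos, lintegral_latticeAverage hΞ hΓ hneg,
    ← integral_toReal (hm hpos).aemeasurable (ae_lt_top (hm hpos) hfinpos),
    ← integral_toReal (hm hneg).aemeasurable (ae_lt_top (hm hneg) hfinneg),
    ← integral_sub (integrable_toReal_of_lintegral_ne_top (hm hpos).aemeasurable hfinpos)
      (integrable_toReal_of_lintegral_ne_top (hm hneg).aemeasurable hfinneg)]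
  refine integral_congr_ae (hae.mono fun Λ hΛ => ?_)
  exact integral_eq_lintegral_pos_part_sub_lintegral_neg_part hΛ

/-- **Siegel integral formula.** For a bounded, compactly supported measurable
`f : ℝⁿ → ℝ`, the average over `X_n` of `Λ ↦ Σ_{0 ≠ v ∈ Λ} f(v)` equals `∫_{ℝⁿ} f dm`. -/
theorem siegel_integral_formula (n : ℕ) (hn : 2 ≤ n)
    (μ : Measure (LatticeSpace n)) [IsProbabilityMeasure μ]
    (hinv : ∀ (g : SLR n) (s : Set (LatticeSpace n)), μ ((fun x => g • x) ⁻¹' s) = μ s)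
    (f : (Fin n → ℝ) → ℝ) (hmeas : Measurable f)
    (hbd : ∃ C : ℝ, ∀ x, |f x| ≤ C) (hsupp : HasCompactSupport f) :
    ∫ Λ, (∑' m : {m : Fin n → ℤ // m ≠ 0}, f (vecOf n Λ.out m.1)) ∂μ =
      ∫ x, f x ∂(volume : Measure (Fin n → ℝ)) := by
  obtain ⟨C, hC⟩ := hbd
  have hvol := latticeAverage_latticeMeasure hn hinv
  have hfint : Integrable f (latticeAverage μ latticeMeasure) := by
    rw [hvol, ← integrableOn_iff_integrable_of_support_subset (subset_tsupport f)]
    exact Measure.integrableOn_of_bounded hsupp.isCompact.measure_lt_top.ne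
      hmeas.aestronglyMeasurable (ae_of_all _ hC)
  obtain ⟨hae, heq⟩ :=
    integral_latticeAverage measurable_latticeMeasure latticeMeasure_mul_mem hmeas hfint
  rw [← hvol, ← heq]
  refine integral_congr_ae (hae.mono fun Λ hΛ => ?_)
  exact (integral_pointMeasure _ hmeas hΛ).symm
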